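/- arXiv:2106.00094 — 5 statements merged into one kernel-verified Lean document; each statement's English description precedes it below -/
import Mathlib

section
/- Every γ ∈ Iw⁺_{GSp_{2g}} can be written uniquely as γ = ν·τ·ν' with ν ∈ U^{opp}_{GSp_{2g},1}, τ ∈ T_{GSp_{2g},0} and ν' ∈ U⁺_{GSp_{2g},0}, and conversely every such product lies in Iw⁺_{GSp_{2g}}. In particular Iw⁺_{GSp_{2g}} = U^{opp}_{GSp_{2g},1}·T_{GSp_{2g},0}·U⁺_{GSp_{2g},0}. -/
open Matrix

/-- The `g × g` anti-diagonal matrix `J̆`: the `(i, j)` entry is `1` exactly when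
`j = g + 1 - i` in one-based numbering, i.e. `i + j + 1 = g` in zero-based numbering. -/
def Jb (g : ℕ) (R : Type*) [CommRing R] : Matrix (Fin g) (Fin g) R :=
  Matrix.of fun i j => if (i : ℕ) + (j : ℕ) + 1 = g then 1 else 0

/-- The standard symplectic matrix `J = [[0, -J̆], [J̆, 0]]` of size `2g`. -/
def Jmat (g : ℕ) (R : Type*) [CommRing R] :
    Matrix (Fin g ⊕ Fin g) (Fin g ⊕ Fin g) R :=
  Matrix.fromBlocks 0 (-(Jb g R)) (Jb g R) 0

/-- Membership in the symplectic similitude group `GSp_{2g}(R)`: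
`ᵗγ J γ = ς · J` for some unit `ς` (the similitude factor). -/
def IsGSp {g : ℕ} {R : Type*} [CommRing R]
    (M : Matrix (Fin g ⊕ Fin g) (Fin g ⊕ Fin g) R) : Prop :=
  IsUnit M.det ∧ ∃ s : Rˣ, Mᵀ * Jmat g R * M = (s : R) • Jmat g R

/-- The linear position of an index of a `2g × 2g` matrix indexed by `Fin g ⊕ Fin g`. -/
def idx {g : ℕ} : Fin g ⊕ Fin g → ℕ :=
  Sum.elim (fun i => (i : ℕ)) fun i => g + (i : ℕ)

/-- The strict Iwahori subgroup `Iw⁺_{GSp_{2g}}` of `GSp_{2g}(ℤ_p)`: mod `p`, the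
lower-left block vanishes and the two diagonal blocks are diagonal. -/
def IwGSpPlus (p g : ℕ) [Fact p.Prime] :
    Set (Matrix (Fin g ⊕ Fin g) (Fin g ⊕ Fin g) ℤ_[p]) :=
  {M | IsGSp M ∧ (∀ i j : Fin g, (p : ℤ_[p]) ∣ M (Sum.inr i) (Sum.inl j)) ∧
    (∀ i j : Fin g, i ≠ j → (p : ℤ_[p]) ∣ M (Sum.inl i) (Sum.inl j)) ∧
    ∀ i j : Fin g, i ≠ j → (p : ℤ_[p]) ∣ M (Sum.inr i) (Sum.inr j)}

/-- `U^{opp}_{GSp_{2g},1}`: lower triangular matrices in `GSp_{2g}(ℤ_p)` with all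
diagonal entries equal to `1` that are congruent to the identity mod `p`. -/
def UGSpOpp1 (p g : ℕ) [Fact p.Prime] :
    Set (Matrix (Fin g ⊕ Fin g) (Fin g ⊕ Fin g) ℤ_[p]) :=
  {M | IsGSp M ∧ (∀ a b : Fin g ⊕ Fin g, idx a < idx b → M a b = 0) ∧
    (∀ a : Fin g ⊕ Fin g, M a a = 1) ∧
    ∀ a b : Fin g ⊕ Fin g,
      (p : ℤ_[p]) ∣ (M a b - (1 : Matrix (Fin g ⊕ Fin g) (Fin g ⊕ Fin g) ℤ_[p]) a b)}

/-- `T_{GSp_{2g},0}`: diagonal matrices in `GSp_{2g}(ℤ_p)`. -/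
def TGSp0 (p g : ℕ) [Fact p.Prime] :
    Set (Matrix (Fin g ⊕ Fin g) (Fin g ⊕ Fin g) ℤ_[p]) :=
  {M | IsGSp M ∧ ∀ a b : Fin g ⊕ Fin g, a ≠ b → M a b = 0}

/-- `U_{GSp_{2g},0}`: upper triangular unipotent matrices in `GSp_{2g}(ℤ_p)`. -/
def UGSp0 (p g : ℕ) [Fact p.Prime] :
    Set (Matrix (Fin g ⊕ Fin g) (Fin g ⊕ Fin g) ℤ_[p]) :=
  {M | IsGSp M ∧ (∀ a b : Fin g ⊕ Fin g, idx b < idx a → M a b = 0) ∧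
    ∀ a : Fin g ⊕ Fin g, M a a = 1}

/-- `U⁺_{GSp_{2g},0} := U_{GSp_{2g},0} ∩ Iw⁺_{GSp_{2g}}`. -/
def UGSp0Plus (p g : ℕ) [Fact p.Prime] :
    Set (Matrix (Fin g ⊕ Fin g) (Fin g ⊕ Fin g) ℤ_[p]) :=
  {M | M ∈ UGSp0 p g ∧ M ∈ IwGSpPlus p g}


section Aux

open Matrix

lemma aux_isUnit_iff {p : ℕ} [Fact p.Prime] (x : ℤ_[p]) : IsUnit x ↔ ¬ (p : ℤ_[p]) ∣ x := by
  rw [← Ideal.mem_span_singleton, ← PadicInt.maximalIdeal_eq_span_p,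
    IsLocalRing.mem_maximalIdeal, mem_nonunits_iff, not_not]

lemma aux_LB {p : ℕ} [Fact p.Prime] : ∀ (n : ℕ) (M : Matrix (Fin n) (Fin n) ℤ_[p]),
    (∀ i, IsUnit (M i i)) → (∀ i j, j < i → (p : ℤ_[p]) ∣ M i j) →
    ∃ L B : Matrix (Fin n) (Fin n) ℤ_[p], M = L * B ∧ (∀ i j, i < j → L i j = 0) ∧
      (∀ i, L i i = 1) ∧ (∀ i j, j < i → (p : ℤ_[p]) ∣ L i j) ∧ (∀ i j, j < i → B i j = 0) := by
  intro n
  induction n with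
  | zero =>
    intro M _ _
    exact ⟨1, 1, Subsingleton.elim _ _, fun i => i.elim0, fun i => i.elim0, fun i => i.elim0,
      fun i => i.elim0⟩
  | succ n ih =>
    intro M hd hl
    obtain ⟨v, hv⟩ := (hd 0).exists_right_inv
    obtain ⟨L', B', hM, h1, h2, h3, h4⟩ := ih
      (Matrix.of fun i j => M i.succ j.succ - M i.succ 0 * v * M 0 j.succ)
      (by
        intro i
        have := hd i.succ
        rw [aux_isUnit_iff] at this ⊢
        intro h
        apply this
        simp only [Matrix.of_apply] at h
        refine (dvd_sub_left ?_).1 h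
        exact Dvd.dvd.mul_right (Dvd.dvd.mul_right (hl i.succ 0 (Fin.succ_pos i)) _) _)
      (by
        intro i j hij
        simp only [Matrix.of_apply]
        refine dvd_sub (hl _ _ (Fin.succ_lt_succ_iff.2 hij)) ?_
        exact Dvd.dvd.mul_right (Dvd.dvd.mul_right (hl i.succ 0 (Fin.succ_pos i)) _) _)
    refine ⟨Matrix.of (Fin.cons (Fin.cons 1 0) fun i => Fin.cons (M i.succ 0 * v) (L' i)),
      Matrix.of (Fin.cons (M 0) fun i => Fin.cons 0 (B' i)), ?_, ?_, ?_, ?_, ?_⟩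
    · ext i j
      have hM' := fun i j => congrFun (congrFun hM i) j
      simp only [Matrix.of_apply, Matrix.mul_apply] at hM'
      rw [Matrix.mul_apply, Fin.sum_univ_succ]
      refine Fin.cases ?_ (fun i => ?_) i
      · simp
      · refine Fin.cases ?_ (fun j => ?_) j
        · simp [mul_assoc, mul_comm v, hv]
        · simp [← hM']
    · intro i j
      refine Fin.cases ?_ (fun i => ?_) i <;> refine Fin.cases ?_ (fun j => ?_) j <;> simp
      exact h1 i j
    · intro i
      refine Fin.cases ?_ (fun i => ?_) i <;> simp [h2]
    · intro i j
      refine Fin.cases ?_ (fun i => ?_) i <;> refine Fin.cases ?_ (fun j => ?_) j <;> simp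
      · exact Dvd.dvd.mul_right (hl i.succ 0 (Fin.succ_pos i)) _
      · exact h3 i j
    · intro i j
      refine Fin.cases ?_ (fun i => ?_) i <;> refine Fin.cases ?_ (fun j => ?_) j <;> simp
      exact h4 i j

lemma aux_idx {g : ℕ} (a : Fin g ⊕ Fin g) : idx a = (finSumFinEquiv a : Fin (g + g)).val := by
  cases a <;> simp [idx, add_comm]

lemma aux_idx_inj {g : ℕ} {a b : Fin g ⊕ Fin g} (h : idx a = idx b) : a = b := by
  rw [aux_idx, aux_idx] at h
  exact finSumFinEquiv.injective (Fin.ext h)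

abbrev LowT {g : ℕ} {R : Type*} [CommRing R] (M : Matrix (Fin g ⊕ Fin g) (Fin g ⊕ Fin g) R) :
    Prop := ∀ a b, idx a < idx b → M a b = 0

abbrev UpT {g : ℕ} {R : Type*} [CommRing R] (M : Matrix (Fin g ⊕ Fin g) (Fin g ⊕ Fin g) R) :
    Prop := ∀ a b, idx b < idx a → M a b = 0

lemma aux_LB' {p g : ℕ} [Fact p.Prime] (M : Matrix (Fin g ⊕ Fin g) (Fin g ⊕ Fin g) ℤ_[p])
    (hd : ∀ a, IsUnit (M a a)) (hl : ∀ a b, idx b < idx a → (p : ℤ_[p]) ∣ M a b) :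
    ∃ L B : Matrix (Fin g ⊕ Fin g) (Fin g ⊕ Fin g) ℤ_[p], M = L * B ∧ LowT L ∧
      (∀ i, L i i = 1) ∧ (∀ i j, idx j < idx i → (p : ℤ_[p]) ∣ L i j) ∧ UpT B := by
  obtain ⟨L, B, h0, h1, h2, h3, h4⟩ := aux_LB (g + g)
    (M.submatrix finSumFinEquiv.symm finSumFinEquiv.symm) (fun i => hd _)
    (fun i j hij => hl _ _ (by simpa [aux_idx] using hij))
  refine ⟨L.submatrix finSumFinEquiv finSumFinEquiv, B.submatrix finSumFinEquiv finSumFinEquiv,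
    ?_, ?_, ?_, ?_, ?_⟩
  · rw [Matrix.submatrix_mul_equiv, ← h0]
    simp
  · intro a b h
    exact h1 _ _ (by simpa [aux_idx] using h)
  · intro a; exact h2 _
  · intro a b h
    exact h3 _ _ (by simpa [aux_idx] using h)
  · intro a b h
    exact h4 _ _ (by simpa [aux_idx] using h)

section ring

variable {g : ℕ} {R : Type*} [CommRing R]

lemma aux_upT_inv {M : Matrix (Fin g ⊕ Fin g) (Fin g ⊕ Fin g) R} (hM : IsUnit M.det)
    (h : UpT M) : UpT M⁻¹ := by
  let _ := Matrix.invertibleOfIsUnitDet M hM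
  have : BlockTriangular M idx := fun i j hij => h i j hij
  exact fun a b hab => blockTriangular_inv_of_blockTriangular this hab

lemma aux_upT_mul {M N : Matrix (Fin g ⊕ Fin g) (Fin g ⊕ Fin g) R} (hM : UpT M)
    (hN : UpT N) : UpT (M * N) := by
  have h1 : BlockTriangular M idx := fun i j hij => hM i j hij
  have h2 : BlockTriangular N idx := fun i j hij => hN i j hij
  exact fun a b hab => h1.mul h2 hab

lemma aux_lowT_inv {M : Matrix (Fin g ⊕ Fin g) (Fin g ⊕ Fin g) R} (hM : IsUnit M.det)
    (h : LowT M) : LowT M⁻¹ := by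
  have := aux_upT_inv (M := Mᵀ) (by rwa [Matrix.det_transpose]) (fun a b hab => h b a hab)
  intro a b hab
  rw [← Matrix.transpose_nonsing_inv] at this
  exact this b a hab

lemma aux_lowT_mul {M N : Matrix (Fin g ⊕ Fin g) (Fin g ⊕ Fin g) R} (hM : LowT M)
    (hN : LowT N) : LowT (M * N) := by
  intro a b hab
  have := aux_upT_mul (M := Nᵀ) (N := Mᵀ) (fun a b hab => hN b a hab)
    (fun a b hab => hM b a hab)
  rw [← Matrix.transpose_mul] at this
  exact this b a hab

lemma aux_diag_up {M N : Matrix (Fin g ⊕ Fin g) (Fin g ⊕ Fin g) R} (hM : UpT M)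
    (hN : UpT N) (a) : (M * N) a a = M a a * N a a := by
  rw [Matrix.mul_apply]
  refine Finset.sum_eq_single a (fun b _ hb => ?_) (by simp)
  rcases lt_trichotomy (idx a) (idx b) with h | h | h
  · rw [hN b a h, mul_zero]
  · exact absurd (aux_idx_inj h.symm) hb
  · rw [hM a b h, zero_mul]

lemma aux_diag_low {M N : Matrix (Fin g ⊕ Fin g) (Fin g ⊕ Fin g) R} (hM : LowT M)
    (hN : LowT N) (a) : (M * N) a a = M a a * N a a := by
  rw [Matrix.mul_apply]
  refine Finset.sum_eq_single a (fun b _ hb => ?_) (by simp)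
  rcases lt_trichotomy (idx a) (idx b) with h | h | h
  · rw [hM a b h, zero_mul]
  · exact absurd (aux_idx_inj h.symm) hb
  · rw [hN b a h, mul_zero]

lemma aux_uniq {L B L' B' : Matrix (Fin g ⊕ Fin g) (Fin g ⊕ Fin g) R}
    (hL : LowT L) (hL' : LowT L') (h1 : ∀ a, L a a = 1) (h1' : ∀ a, L' a a = 1)
    (hB : UpT B) (hB' : UpT B') (uL' : IsUnit L'.det) (uB : IsUnit B.det)
    (h : L * B = L' * B') : L = L' ∧ B = B' := by
  have e : L'⁻¹ * L = B' * B⁻¹ := by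
    have : L'⁻¹ * (L * B) * B⁻¹ = L'⁻¹ * (L' * B') * B⁻¹ := by rw [h]
    rwa [Matrix.nonsing_inv_mul_cancel_left _ _ uL', ← Matrix.mul_assoc,
      Matrix.mul_nonsing_inv_cancel_right _ _ uB] at this
  have lo : LowT (L'⁻¹ * L) := aux_lowT_mul (aux_lowT_inv uL' hL') hL
  have up : UpT (L'⁻¹ * L) := e ▸ aux_upT_mul hB' (aux_upT_inv uB hB)
  have hL2 : L' * (L'⁻¹ * L) = L := Matrix.mul_nonsing_inv_cancel_left _ _ uL'
  have one : L'⁻¹ * L = 1 := by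
    ext a b
    rcases lt_trichotomy (idx a) (idx b) with hh | hh | hh
    · rw [lo a b hh, Matrix.one_apply_ne]; rintro rfl; exact lt_irrefl _ hh
    · obtain rfl := aux_idx_inj hh
      have := aux_diag_low hL' lo a
      rw [hL2, h1, h1', one_mul] at this
      rw [← this, Matrix.one_apply_eq]
    · rw [up a b hh, Matrix.one_apply_ne]; rintro rfl; exact lt_irrefl _ hh
  rw [one, Matrix.mul_one] at hL2
  refine ⟨hL2.symm, ?_⟩
  rw [one] at e
  have : (B' * B⁻¹) * B = B' := Matrix.nonsing_inv_mul_cancel_right _ _ uB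
  rw [← e, Matrix.one_mul] at this
  exact this

lemma aux_diag_mul {D U : Matrix (Fin g ⊕ Fin g) (Fin g ⊕ Fin g) R}
    (hD : ∀ a b, a ≠ b → D a b = 0) (a b) : (D * U) a b = D a a * U a b := by
  rw [Matrix.mul_apply]
  refine Finset.sum_eq_single a (fun c _ hc => ?_) (by simp)
  rw [hD a c hc.symm, zero_mul]

lemma aux_diag_up' {D : Matrix (Fin g ⊕ Fin g) (Fin g ⊕ Fin g) R}
    (hD : ∀ a b, a ≠ b → D a b = 0) : UpT D :=
  fun a b h => hD a b (by rintro rfl; exact lt_irrefl _ h)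

lemma aux_diag_low' {D : Matrix (Fin g ⊕ Fin g) (Fin g ⊕ Fin g) R}
    (hD : ∀ a b, a ≠ b → D a b = 0) : LowT D :=
  fun a b h => hD a b (by rintro rfl; exact lt_irrefl _ h)

lemma aux_uniq2 {D U D' U' : Matrix (Fin g ⊕ Fin g) (Fin g ⊕ Fin g) R}
    (hD : ∀ a b, a ≠ b → D a b = 0) (hD' : ∀ a b, a ≠ b → D' a b = 0)
    (hU : ∀ a, U a a = 1) (hU' : ∀ a, U' a a = 1) (uD : IsUnit D.det)
    (h : D * U = D' * U') : D = D' ∧ U = U' := by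
  have e : D = D' := by
    ext a b
    by_cases hab : a = b
    · subst hab
      have := congrFun (congrFun h a) a
      rwa [aux_diag_mul hD, aux_diag_mul hD', hU, hU', mul_one, mul_one] at this
    · rw [hD a b hab, hD' a b hab]
  subst e
  refine ⟨rfl, ?_⟩
  rw [← Matrix.nonsing_inv_mul_cancel_left D U uD, h, Matrix.nonsing_inv_mul_cancel_left D U' uD]

def rv : Fin g ⊕ Fin g → Fin g ⊕ Fin g := Sum.elim (fun i => Sum.inr i.rev) fun i => Sum.inl i.rev

def sg (R : Type*) [CommRing R] : Fin g ⊕ Fin g → R := Sum.elim (fun _ => -1) fun _ => 1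

lemma rv_rv (a : Fin g ⊕ Fin g) : rv (rv a) = a := by cases a <;> simp [rv]

lemma sg_rv (a : Fin g ⊕ Fin g) : sg R a * sg R (rv a) = -1 := by cases a <;> simp [rv, sg]

lemma idx_rv {a b : Fin g ⊕ Fin g} (h : idx a < idx b) : idx (rv b) < idx (rv a) := by
  rcases a with a | a <;> rcases b with b | b <;> simp [rv, idx, Fin.val_rev] at * <;> omega

lemma J_apply (a b : Fin g ⊕ Fin g) : Jmat g R a b = if b = rv a then sg R a else 0 := by
  have key : ∀ i j : Fin g, ((i : ℕ) + j + 1 = g) ↔ j = i.rev := by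
    intro i j
    rw [Fin.ext_iff, Fin.val_rev]
    omega
  rcases a with a | a <;> rcases b with b | b <;> simp [Jmat, Jb, rv, sg, key]
  split_ifs <;> simp

lemma JXJ (X : Matrix (Fin g ⊕ Fin g) (Fin g ⊕ Fin g) R) (a b : Fin g ⊕ Fin g) :
    (Jmat g R * X * Jmat g R) a b = sg R a * X (rv a) (rv b) * sg R (rv b) := by
  have h : ∀ c, (b = rv c) ↔ (c = rv b) := fun c =>
    ⟨fun h => by rw [h, rv_rv], fun h => by rw [h, rv_rv]⟩
  simp [Matrix.mul_apply, J_apply, h]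

lemma JJ : Jmat g R * Jmat g R = -1 := by
  ext a b
  have := JXJ (R := R) 1 a b
  rw [Matrix.mul_one] at this
  rw [this, Matrix.one_apply, Matrix.neg_apply, Matrix.one_apply]
  by_cases hab : a = b
  · subst hab; simp [sg_rv]
  · have : rv a ≠ rv b := fun h => hab (by rw [← rv_rv a, h, rv_rv])
    simp [hab, this]

noncomputable def th (X : Matrix (Fin g ⊕ Fin g) (Fin g ⊕ Fin g) R) : Matrix (Fin g ⊕ Fin g) (Fin g ⊕ Fin g) R :=
  -(Jmat g R * (X⁻¹)ᵀ * Jmat g R)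

lemma th_apply (X : Matrix (Fin g ⊕ Fin g) (Fin g ⊕ Fin g) R) (a b) :
    th X a b = -(sg R a * X⁻¹ (rv b) (rv a) * sg R (rv b)) := by
  rw [th, Matrix.neg_apply, JXJ, Matrix.transpose_apply]

lemma th_mul (X Y : Matrix (Fin g ⊕ Fin g) (Fin g ⊕ Fin g) R) : th (X * Y) = th X * th Y := by
  have : th X * th Y = Jmat g R * (X⁻¹)ᵀ * (Jmat g R * Jmat g R) * (Y⁻¹)ᵀ * Jmat g R := by
    simp only [th, Matrix.neg_mul, Matrix.mul_neg, neg_neg, Matrix.mul_assoc]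
  rw [this, JJ, th, Matrix.mul_inv_rev, Matrix.transpose_mul]
  simp only [Matrix.mul_neg, Matrix.neg_mul, Matrix.mul_one, Matrix.mul_assoc]

lemma th_iff {X : Matrix (Fin g ⊕ Fin g) (Fin g ⊕ Fin g) R} (hX : IsUnit X.det) (s : R) :
    Xᵀ * Jmat g R * X = s • Jmat g R ↔ X = s • th X := by
  have hT : (X⁻¹)ᵀ * Xᵀ = 1 := by
    rw [← Matrix.transpose_mul, Matrix.mul_nonsing_inv _ hX, Matrix.transpose_one]
  have hT' : Xᵀ * (X⁻¹)ᵀ = 1 := by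
    rw [← Matrix.transpose_mul, Matrix.nonsing_inv_mul _ hX, Matrix.transpose_one]
  constructor
  · intro h
    have h2 : Jmat g R * (X⁻¹)ᵀ * (Xᵀ * Jmat g R * X) = -X := by
      calc _ = Jmat g R * ((X⁻¹)ᵀ * Xᵀ) * Jmat g R * X := by simp only [Matrix.mul_assoc]
        _ = -X := by rw [hT, Matrix.mul_one, JJ, Matrix.neg_mul, Matrix.one_mul]
    rw [h, Matrix.mul_smul] at h2
    rw [th, smul_neg, h2, neg_neg]
  · intro h
    have h2 : Xᵀ * Jmat g R * th X = Jmat g R := by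
      calc _ = -(Xᵀ * (Jmat g R * Jmat g R) * (X⁻¹)ᵀ * Jmat g R) := by
            simp only [th, Matrix.mul_neg, Matrix.mul_assoc]
        _ = Jmat g R := by
            rw [JJ, Matrix.mul_neg, Matrix.mul_one, Matrix.neg_mul, hT', Matrix.neg_mul,
              Matrix.one_mul, neg_neg]
    calc Xᵀ * Jmat g R * X = Xᵀ * Jmat g R * (s • th X) := by rw [← h]
      _ = s • Jmat g R := by rw [Matrix.mul_smul, h2]

lemma inv_one_low {X : Matrix (Fin g ⊕ Fin g) (Fin g ⊕ Fin g) R} (hX : IsUnit X.det)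
    (h : LowT X) (h1 : ∀ a, X a a = 1) (a) : X⁻¹ a a = 1 := by
  have := aux_diag_low h (aux_lowT_inv hX h) a
  rw [Matrix.mul_nonsing_inv _ hX, h1, one_mul, Matrix.one_apply_eq] at this
  exact this.symm

lemma inv_one_up {X : Matrix (Fin g ⊕ Fin g) (Fin g ⊕ Fin g) R} (hX : IsUnit X.det)
    (h : UpT X) (h1 : ∀ a, X a a = 1) (a) : X⁻¹ a a = 1 := by
  have := aux_diag_up h (aux_upT_inv hX h) a
  rw [Matrix.mul_nonsing_inv _ hX, h1, one_mul, Matrix.one_apply_eq] at this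
  exact this.symm

lemma th_low {X : Matrix (Fin g ⊕ Fin g) (Fin g ⊕ Fin g) R} (hX : IsUnit X.det)
    (h : LowT X) : LowT (th X) := by
  intro a b hab
  rw [th_apply, aux_lowT_inv hX h _ _ (idx_rv hab)]; simp

lemma th_up {X : Matrix (Fin g ⊕ Fin g) (Fin g ⊕ Fin g) R} (hX : IsUnit X.det)
    (h : UpT X) : UpT (th X) := by
  intro a b hab
  rw [th_apply, aux_upT_inv hX h _ _ (idx_rv hab)]; simp

lemma th_one {X : Matrix (Fin g ⊕ Fin g) (Fin g ⊕ Fin g) R} (h : ∀ a, X⁻¹ a a = 1) (a) :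
    th X a a = 1 := by
  rw [th_apply, h, mul_one, sg_rv, neg_neg]

lemma th_diag {X : Matrix (Fin g ⊕ Fin g) (Fin g ⊕ Fin g) R} (hX : IsUnit X.det)
    (h : ∀ a b, a ≠ b → X a b = 0) : ∀ a b, a ≠ b → th X a b = 0 := by
  intro a b hab
  rcases lt_trichotomy (idx a) (idx b) with hh | hh | hh
  · exact th_low hX (aux_diag_low' h) a b hh
  · exact absurd (aux_idx_inj hh) hab
  · exact th_up hX (aux_diag_up' h) a b hh

lemma th_det {X : Matrix (Fin g ⊕ Fin g) (Fin g ⊕ Fin g) R} (hX : IsUnit X.det) :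
    IsUnit (th X).det := by
  have : th X * th X⁻¹ = 1 := by
    rw [← th_mul, Matrix.mul_nonsing_inv _ hX, th]
    simp [JJ]
  exact Matrix.isUnit_det_of_right_inverse this

lemma aux_gsp {L D U : Matrix (Fin g ⊕ Fin g) (Fin g ⊕ Fin g) R}
    (hL : LowT L) (h1 : ∀ a, L a a = 1) (hD : ∀ a b, a ≠ b → D a b = 0)
    (hU : UpT U) (hU1 : ∀ a, U a a = 1) (h : IsGSp (L * (D * U))) :
    IsGSp L ∧ IsGSp D ∧ IsGSp U := by
  obtain ⟨hu, s, hs⟩ := h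
  rw [th_iff hu, th_mul, th_mul, ← Matrix.mul_smul] at hs
  rw [Matrix.det_mul, IsUnit.mul_iff, Matrix.det_mul, IsUnit.mul_iff] at hu
  obtain ⟨uL, uD, uU⟩ := hu
  have tU : UpT (s.val • (th D * th U)) := by
    intro a b hab
    rw [Matrix.smul_apply, aux_upT_mul (th_up uD (aux_diag_up' hD)) (th_up uU hU) a b hab,
      smul_zero]
  obtain ⟨eL, eB⟩ := aux_uniq hL (th_low uL hL) h1 (th_one (inv_one_low uL hL h1))
    (aux_upT_mul (aux_diag_up' hD) hU) tU (th_det uL)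
    (by rw [Matrix.det_mul]; exact uD.mul uU) hs
  rw [← Matrix.smul_mul] at eB
  obtain ⟨eD, eU⟩ := aux_uniq2 hD (D' := s.val • th D)
    (fun a b hab => by rw [Matrix.smul_apply, th_diag uD hD a b hab, smul_zero])
    hU1 (th_one (inv_one_up uU hU hU1)) uD eB
  refine ⟨⟨uL, 1, ?_⟩, ⟨uD, s, ?_⟩, ⟨uU, 1, ?_⟩⟩
  · rw [th_iff uL, Units.val_one, one_smul]; exact eL
  · rw [th_iff uD]; exact eD
  · rw [th_iff uU, Units.val_one, one_smul]; exact eU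

lemma IsGSp.mul' {X Y : Matrix (Fin g ⊕ Fin g) (Fin g ⊕ Fin g) R} (hX : IsGSp X)
    (hY : IsGSp Y) : IsGSp (X * Y) := by
  obtain ⟨uX, s, hs⟩ := hX
  obtain ⟨uY, t, ht⟩ := hY
  refine ⟨by rw [Matrix.det_mul]; exact uX.mul uY, s * t, ?_⟩
  calc (X * Y)ᵀ * Jmat g R * (X * Y) = Yᵀ * (Xᵀ * Jmat g R * X) * Y := by
        rw [Matrix.transpose_mul]; simp only [Matrix.mul_assoc]
    _ = _ := by rw [hs, Matrix.mul_smul, Matrix.smul_mul, ht, smul_smul, Units.val_mul]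

end ring

lemma aux_diag_unit {p g : ℕ} [Fact p.Prime] (M : Matrix (Fin g ⊕ Fin g) (Fin g ⊕ Fin g) ℤ_[p])
    (hM : IsUnit M.det) (hl : ∀ a b, idx b < idx a → (p : ℤ_[p]) ∣ M a b) (a) :
    IsUnit (M a a) := by
  have key : ∀ x : ℤ_[p], PadicInt.toZMod x = 0 ↔ (p : ℤ_[p]) ∣ x := by
    intro x
    rw [← RingHom.mem_ker, PadicInt.ker_toZMod, PadicInt.maximalIdeal_eq_span_p,
      Ideal.mem_span_singleton]
  let N : Matrix (Fin (g + g)) (Fin (g + g)) (ZMod p) :=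
    (PadicInt.toZMod.mapMatrix M).submatrix finSumFinEquiv.symm finSumFinEquiv.symm
  have hN : N.det = PadicInt.toZMod M.det := by
    rw [Matrix.det_submatrix_equiv_self, ← RingHom.map_det]
  have hT : N.IsUpperTriangular := by
    intro i j hij
    exact (key _).2 (hl _ _ (by simpa [aux_idx] using hij))
  have hu : IsUnit N.det := hN ▸ hM.map _
  rw [Matrix.det_of_isUpperTriangular hT, isUnit_iff_ne_zero, Finset.prod_ne_zero_iff] at hu
  have := hu (finSumFinEquiv a) (Finset.mem_univ _)
  rw [aux_isUnit_iff, ← key]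
  simpa [N] using this

lemma aux_cong {p g : ℕ} [Fact p.Prime] {L B : Matrix (Fin g ⊕ Fin g) (Fin g ⊕ Fin g) ℤ_[p]}
    (hL : ∀ a b, (p : ℤ_[p]) ∣
      (L a b - (1 : Matrix (Fin g ⊕ Fin g) (Fin g ⊕ Fin g) ℤ_[p]) a b)) (a b) :
    (p : ℤ_[p]) ∣ (L * B) a b ↔ (p : ℤ_[p]) ∣ B a b := by
  have : (L * B) a b = ((L - 1) * B) a b + B a b := by
    rw [← Matrix.add_apply, Matrix.sub_mul, Matrix.one_mul, sub_add_cancel]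
  rw [this]
  refine dvd_add_right ?_
  rw [Matrix.mul_apply]
  exact Finset.dvd_sum fun c _ => Dvd.dvd.mul_right (hL a c) _

end Aux

theorem statement2 (p g : ℕ) [Fact p.Prime] (hg : 1 ≤ g) :
    (∀ M ∈ IwGSpPlus p g,
      ∃! T : Matrix (Fin g ⊕ Fin g) (Fin g ⊕ Fin g) ℤ_[p] ×
          Matrix (Fin g ⊕ Fin g) (Fin g ⊕ Fin g) ℤ_[p] ×
          Matrix (Fin g ⊕ Fin g) (Fin g ⊕ Fin g) ℤ_[p],
        T.1 ∈ UGSpOpp1 p g ∧ T.2.1 ∈ TGSp0 p g ∧ T.2.2 ∈ UGSp0Plus p g ∧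
          M = T.1 * T.2.1 * T.2.2) ∧
    ∀ ν ∈ UGSpOpp1 p g, ∀ τ ∈ TGSp0 p g, ∀ ν' ∈ UGSp0Plus p g,
      ν * τ * ν' ∈ IwGSpPlus p g := by
  constructor
  · intro M hM
    obtain ⟨hG, hc, ha, hd⟩ := hM
    have hl : ∀ a b, idx b < idx a → (p : ℤ_[p]) ∣ M a b := by
      intro a b hab
      rcases a with i | i <;> rcases b with j | j
      · exact ha i j (by rintro rfl; exact lt_irrefl _ hab)
      · simp [idx] at hab; omega
      · exact hc i j
      · exact hd i j (by rintro rfl; exact lt_irrefl _ hab)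
    obtain ⟨L, B, hLB, hL, hL1, hLp, hB⟩ := aux_LB' M (aux_diag_unit M hG.1 hl) hl
    have hLc : ∀ a b, (p : ℤ_[p]) ∣
        (L a b - (1 : Matrix (Fin g ⊕ Fin g) (Fin g ⊕ Fin g) ℤ_[p]) a b) := by
      intro a b
      rcases lt_trichotomy (idx a) (idx b) with h | h | h
      · rw [hL a b h, Matrix.one_apply_ne (by rintro rfl; exact lt_irrefl _ h)]; simp
      · obtain rfl := aux_idx_inj h
        rw [hL1, Matrix.one_apply_eq]; simp
      · rw [Matrix.one_apply_ne (by rintro rfl; exact lt_irrefl _ h), sub_zero]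
        exact hLp a b h
    have hBu : ∀ a, IsUnit (B a a) := by
      intro a
      have := aux_diag_unit M hG.1 hl a
      rw [aux_isUnit_iff] at this ⊢
      rwa [hLB, aux_cong hLc] at this
    choose v hv using fun a => (hBu a).exists_right_inv
    set D : Matrix (Fin g ⊕ Fin g) (Fin g ⊕ Fin g) ℤ_[p] :=
      Matrix.diagonal fun a => B a a with hDdef
    set U : Matrix (Fin g ⊕ Fin g) (Fin g ⊕ Fin g) ℤ_[p] :=
      Matrix.of fun a b => v a * B a b with hUdef
    have hDU : B = D * U := by
      ext a b
      rw [hDdef, Matrix.diagonal_mul, hUdef, Matrix.of_apply, ← mul_assoc, hv, one_mul]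
    have hD : ∀ a b, a ≠ b → D a b = 0 := fun a b h => Matrix.diagonal_apply_ne _ h
    have hU : UpT U := fun a b h => by rw [hUdef, Matrix.of_apply, hB a b h, mul_zero]
    have hU1 : ∀ a, U a a = 1 := fun a => by rw [hUdef, Matrix.of_apply, mul_comm, hv]
    have hMLDU : M = L * (D * U) := by rw [← hDU]; exact hLB
    obtain ⟨gL, gD, gU⟩ := aux_gsp hL hL1 hD hU hU1 (hMLDU ▸ hG)
    have hUp : ∀ a b, (p : ℤ_[p]) ∣ M a b → (p : ℤ_[p]) ∣ U a b := by
      intro a b h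
      rw [hLB, aux_cong hLc] at h
      exact Dvd.dvd.mul_left h _
    refine ⟨(L, D, U), ⟨⟨gL, hL, hL1, hLc⟩, ⟨gD, hD⟩, ⟨⟨gU, hU, hU1⟩, gU, ?_, ?_, ?_⟩, ?_⟩, ?_⟩
    · exact fun i j => hUp _ _ (hc i j)
    · exact fun i j h => hUp _ _ (ha i j h)
    · exact fun i j h => hUp _ _ (hd i j h)
    · rw [Matrix.mul_assoc]; exact hMLDU
    · rintro ⟨L', D', U'⟩ ⟨⟨gL', hL', hL1', -⟩, ⟨gD', hD'⟩, ⟨⟨gU', hU', hU1'⟩, -⟩, hM'⟩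
      simp only at gL' hL' hL1' gD' hD' gU' hU' hU1' hM'
      rw [Matrix.mul_assoc] at hM'
      obtain ⟨e1, e2⟩ := aux_uniq hL' hL hL1' hL1 (aux_upT_mul (aux_diag_up' hD') hU')
        (aux_upT_mul (aux_diag_up' hD) hU) gL.1 (gD'.mul' gU').1 (hM'.symm.trans hMLDU)
      obtain ⟨e3, e4⟩ := aux_uniq2 hD' hD hU1' hU1 gD'.1 e2
      rw [e1, e3, e4]
  · rintro ν ⟨gν, -, -, hν⟩ τ ⟨gτ, hτ⟩ ν' ⟨-, gν', h1, h2, h3⟩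
    have key : ∀ a b, (p : ℤ_[p]) ∣ ν' a b → (p : ℤ_[p]) ∣ (ν * τ * ν') a b := by
      intro a b h
      rw [Matrix.mul_assoc, aux_cong hν, aux_diag_mul hτ]
      exact Dvd.dvd.mul_left h _
    exact ⟨(gν.mul' gτ).mul' gν', fun i j => key _ _ (h1 i j), fun i j h => key _ _ (h2 i j h),
      fun i j h => key _ _ (h3 i j h)⟩
end

section
/- For every w ∈ ℚ_{>0} one has the equalities of subsets of M_g(O_C): Iw^{(w)}_{GL_g} = U^{opp,(w)}_{GL_g,1}·T^{(w)}_{GL_g,0}·U^{(w)}_{GL_g,0} and Iw^{+,(w)}_{GL_g} = U^{opp,(w)}_{GL_g,1}·T^{(w)}_{GL_g,0}·U^{(w)}_{GL_g,1}. -/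
open Matrix

/-- The Iwahori subgroup `Iw_{GL_g}` of `GL_g(ℤ_p)`: invertible matrices over `ℤ_p`
whose reduction mod `p` is upper triangular. -/
def IwGL (p g : ℕ) [Fact p.Prime] : Set (Matrix (Fin g) (Fin g) ℤ_[p]) :=
  {M | IsUnit M.det ∧ ∀ i j : Fin g, j < i → (p : ℤ_[p]) ∣ M i j}

/-- The strict Iwahori subgroup `Iw⁺_{GL_g}` of `GL_g(ℤ_p)`: reduction mod `p` is diagonal. -/
def IwGLplus (p g : ℕ) [Fact p.Prime] : Set (Matrix (Fin g) (Fin g) ℤ_[p]) :=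
  {M | IsUnit M.det ∧ ∀ i j : Fin g, i ≠ j → (p : ℤ_[p]) ∣ M i j}

/-- `T_{GL_g,0}`: diagonal matrices in `GL_g(ℤ_p)`. -/
def TGL (p g : ℕ) [Fact p.Prime] : Set (Matrix (Fin g) (Fin g) ℤ_[p]) :=
  {M | IsUnit M.det ∧ ∀ i j : Fin g, i ≠ j → M i j = 0}

/-- `U_{GL_g,0}`: upper triangular unipotent matrices in `GL_g(ℤ_p)`. -/
def UGL0 (p g : ℕ) [Fact p.Prime] : Set (Matrix (Fin g) (Fin g) ℤ_[p]) :=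
  {M | (∀ i j : Fin g, j < i → M i j = 0) ∧ ∀ i : Fin g, M i i = 1}

/-- `U_{GL_g,1}`: upper triangular unipotent matrices congruent to `1` mod `p`. -/
def UGL1 (p g : ℕ) [Fact p.Prime] : Set (Matrix (Fin g) (Fin g) ℤ_[p]) :=
  {M | M ∈ UGL0 p g ∧ ∀ i j : Fin g, i < j → (p : ℤ_[p]) ∣ M i j}

/-- `U^{opp}_{GL_g,1}`: lower triangular unipotent matrices in `GL_g(ℤ_p)`
congruent to `1` mod `p`. -/
def UGLopp1 (p g : ℕ) [Fact p.Prime] : Set (Matrix (Fin g) (Fin g) ℤ_[p]) :=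
  {M | (∀ i j : Fin g, i < j → M i j = 0) ∧ (∀ i : Fin g, M i i = 1) ∧
    ∀ i j : Fin g, j < i → (p : ℤ_[p]) ∣ M i j}

/-- `B_{GL_g,0}`: upper triangular matrices in `GL_g(ℤ_p)`. -/
def BGL0 (p g : ℕ) [Fact p.Prime] : Set (Matrix (Fin g) (Fin g) ℤ_[p]) :=
  {M | IsUnit M.det ∧ ∀ i j : Fin g, j < i → M i j = 0}

/-- The real number `p^{-w}`. -/
noncomputable def pw (q : ℕ) (w : ℚ) : ℝ := (q : ℝ) ^ (-(w : ℝ))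

/-- The `w`-neighbourhood `Iw^{(w)}_{GL_g}` of the Iwahori subgroup inside `GL_g(O_C)`. -/
def IwW (p g : ℕ) [Fact p.Prime] (C : Type*) [NormedField C]
    (ι : ℤ_[p] →+* C) (w : ℚ) : Set (Matrix (Fin g) (Fin g) C) :=
  {M | (∀ i j, ‖M i j‖ ≤ 1) ∧ ‖M.det‖ = 1 ∧
    ∃ M' ∈ IwGL p g, ∀ i j, ‖M i j - ι (M' i j)‖ ≤ pw p w}

/-- The `w`-neighbourhood `Iw^{+,(w)}_{GL_g}` of the strict Iwahori subgroup
inside `GL_g(O_C)`. -/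
def IwWplus (p g : ℕ) [Fact p.Prime] (C : Type*) [NormedField C]
    (ι : ℤ_[p] →+* C) (w : ℚ) : Set (Matrix (Fin g) (Fin g) C) :=
  {M | (∀ i j, ‖M i j‖ ≤ 1) ∧ ‖M.det‖ = 1 ∧
    ∃ M' ∈ IwGLplus p g, ∀ i j, ‖M i j - ι (M' i j)‖ ≤ pw p w}

/-- `T^{(w)}_{GL_g,0}`: diagonal matrices over `O_C` entrywise within `p^{-w}` of an
element of `T_{GL_g,0}`. -/
def TW (p g : ℕ) [Fact p.Prime] (C : Type*) [NormedField C]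
    (ι : ℤ_[p] →+* C) (w : ℚ) : Set (Matrix (Fin g) (Fin g) C) :=
  {M | (∀ i j : Fin g, i ≠ j → M i j = 0) ∧ (∀ i j, ‖M i j‖ ≤ 1) ∧
    ∃ M' ∈ TGL p g, ∀ i j, ‖M i j - ι (M' i j)‖ ≤ pw p w}

/-- `U^{(w)}_{GL_g,0}`: upper triangular unipotent matrices over `O_C` entrywise
within `p^{-w}` of an element of `U_{GL_g,0}`. -/
def UW0 (p g : ℕ) [Fact p.Prime] (C : Type*) [NormedField C]
    (ι : ℤ_[p] →+* C) (w : ℚ) : Set (Matrix (Fin g) (Fin g) C) :=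
  {M | (∀ i j : Fin g, j < i → M i j = 0) ∧ (∀ i : Fin g, M i i = 1) ∧
    (∀ i j, ‖M i j‖ ≤ 1) ∧
    ∃ M' ∈ UGL0 p g, ∀ i j, ‖M i j - ι (M' i j)‖ ≤ pw p w}

/-- `U^{(w)}_{GL_g,1}`: upper triangular unipotent matrices over `O_C` entrywise
within `p^{-w}` of an element of `U_{GL_g,1}`. -/
def UW1 (p g : ℕ) [Fact p.Prime] (C : Type*) [NormedField C]
    (ι : ℤ_[p] →+* C) (w : ℚ) : Set (Matrix (Fin g) (Fin g) C) :=
  {M | (∀ i j : Fin g, j < i → M i j = 0) ∧ (∀ i : Fin g, M i i = 1) ∧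
    (∀ i j, ‖M i j‖ ≤ 1) ∧
    ∃ M' ∈ UGL1 p g, ∀ i j, ‖M i j - ι (M' i j)‖ ≤ pw p w}

/-- `U^{opp,(w)}_{GL_g,1}`: lower triangular unipotent matrices over `O_C` entrywise
within `p^{-w}` of an element of `U^{opp}_{GL_g,1}`. -/
def UoppW1 (p g : ℕ) [Fact p.Prime] (C : Type*) [NormedField C]
    (ι : ℤ_[p] →+* C) (w : ℚ) : Set (Matrix (Fin g) (Fin g) C) :=
  {M | (∀ i j : Fin g, i < j → M i j = 0) ∧ (∀ i : Fin g, M i i = 1) ∧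
    (∀ i j, ‖M i j‖ ≤ 1) ∧
    ∃ M' ∈ UGLopp1 p g, ∀ i j, ‖M i j - ι (M' i j)‖ ≤ pw p w}

/-! ### Generic LDU factorisation over a commutative ring -/

theorem ldu_exists {R : Type*} [CommRing R] (a b : Ideal R)
    (h : ∀ u x : R, IsUnit u → x ∈ a → IsUnit (u + x)) (n : ℕ) :
    ∀ A : Matrix (Fin n) (Fin n) R, (∀ i, IsUnit (A i i)) → (∀ i j, j < i → A i j ∈ a) →
      (∀ i j, i < j → A i j ∈ b) →
      ∃ (L : Matrix (Fin n) (Fin n) R) (t : Fin n → R) (U : Matrix (Fin n) (Fin n) R),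
        (∀ i j, A i j = ∑ k, L i k * t k * U k j) ∧ (∀ k, IsUnit (t k)) ∧
        (∀ i, L i i = 1) ∧ (∀ i j, i < j → L i j = 0) ∧ (∀ i j, j < i → L i j ∈ a) ∧
        (∀ i, U i i = 1) ∧ (∀ i j, j < i → U i j = 0) ∧ (∀ i j, i < j → U i j ∈ b) := by
  induction n with
  | zero =>
    intro A _ _ _
    exact ⟨A, fun _ => 1, A, fun i => i.elim0, fun i => i.elim0, fun i => i.elim0,
      fun i => i.elim0, fun i => i.elim0, fun i => i.elim0, fun i => i.elim0, fun i => i.elim0⟩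
  | succ n ih =>
    intro A hd hl hu
    obtain ⟨v, hv⟩ := (hd 0).exists_left_inv
    obtain ⟨L, t, U, hA, ht, hL1, hL0, hLa, hU1, hU0, hUb⟩ :=
      ih (fun i j => A i.succ j.succ - A i.succ 0 * v * A 0 j.succ)
        (by
          intro i
          simp only [sub_eq_add_neg]
          refine h _ _ (hd _) (a.neg_mem ?_)
          exact a.mul_mem_right _ (a.mul_mem_right _ (hl _ _ (Fin.succ_pos i))))
        (by
          intro i j hij
          refine a.sub_mem (hl _ _ (Fin.succ_lt_succ_iff.2 hij)) ?_
          exact a.mul_mem_right _ (a.mul_mem_right _ (hl _ _ (Fin.succ_pos i))))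
        (by
          intro i j hij
          refine b.sub_mem (hu _ _ (Fin.succ_lt_succ_iff.2 hij)) ?_
          exact b.mul_mem_left _ (hu _ _ (Fin.succ_pos j)))
    refine ⟨fun i j => Fin.cases (Fin.cases 1 (fun _ => 0) j)
        (fun i' => Fin.cases (A i'.succ 0 * v) (fun j' => L i' j') j) i,
      Fin.cases (A 0 0) t,
      fun i j => Fin.cases (Fin.cases 1 (fun j' => v * A 0 j'.succ) j)
        (fun i' => Fin.cases 0 (fun j' => U i' j') j) i, ?_, ?_, ?_, ?_, ?_, ?_, ?_, ?_⟩
    · intro i j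
      rw [Fin.sum_univ_succ]
      refine Fin.cases ?_ (fun i => ?_) i <;> refine Fin.cases ?_ (fun j => ?_) j
      · simp
      · simp only [Fin.cases_zero, Fin.cases_succ, zero_mul, Finset.sum_const_zero]
        linear_combination -(A 0 j.succ) * hv
      · simp only [Fin.cases_zero, Fin.cases_succ, mul_zero, Finset.sum_const_zero]
        linear_combination -(A i.succ 0) * hv
      · simp only [Fin.cases_zero, Fin.cases_succ]
        rw [← hA i j]
        linear_combination -(A i.succ 0 * v * A 0 j.succ) * hv
    · intro k
      refine Fin.cases ?_ (fun k => ?_) k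
      · exact hd 0
      · exact ht k
    · intro i
      refine Fin.cases ?_ (fun k => ?_) i
      · rfl
      · exact hL1 k
    · intro i j
      refine Fin.cases ?_ (fun i => ?_) i <;> refine Fin.cases ?_ (fun j => ?_) j
      · intro hh; exact absurd hh (lt_irrefl _)
      · intro _; rfl
      · intro hh; exact absurd hh (Fin.not_lt_zero _)
      · intro hh; exact hL0 i j (Fin.succ_lt_succ_iff.1 hh)
    · intro i j
      refine Fin.cases ?_ (fun i => ?_) i <;> refine Fin.cases ?_ (fun j => ?_) j
      · intro hh; exact absurd hh (lt_irrefl _)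
      · intro hh; exact absurd hh (Fin.not_lt_zero _)
      · intro hh; exact a.mul_mem_right _ (hl _ _ hh)
      · intro hh; exact hLa i j (Fin.succ_lt_succ_iff.1 hh)
    · intro i
      refine Fin.cases ?_ (fun k => ?_) i
      · rfl
      · exact hU1 k
    · intro i j
      refine Fin.cases ?_ (fun i => ?_) i <;> refine Fin.cases ?_ (fun j => ?_) j
      · intro hh; exact absurd hh (lt_irrefl _)
      · intro hh; exact absurd hh (Fin.not_lt_zero _)
      · intro _; rfl
      · intro hh; exact hU0 i j (Fin.succ_lt_succ_iff.1 hh)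
    · intro i j
      refine Fin.cases ?_ (fun i => ?_) i <;> refine Fin.cases ?_ (fun j => ?_) j
      · intro hh; exact absurd hh (lt_irrefl _)
      · intro hh; exact b.mul_mem_left _ (hu _ _ hh)
      · intro hh; exact absurd hh (Fin.not_lt_zero _)
      · intro hh; exact hUb i j (Fin.succ_lt_succ_iff.1 hh)

/-- If the entries below the diagonal lie in `a` (with `units + a ⊆ units`) and the determinant
is a unit, then the diagonal entries are units. -/
theorem diag_isUnit {R : Type*} [CommRing R] (a : Ideal R)
    (h : ∀ u x : R, IsUnit u → x ∈ a → IsUnit (u + x)) {n : ℕ}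
    (A : Matrix (Fin n) (Fin n) R) (hA : IsUnit A.det) (hl : ∀ i j, j < i → A i j ∈ a) (i : Fin n) :
    IsUnit (A i i) := by
  have h1 : Ideal.Quotient.mk a A.det = Ideal.Quotient.mk a (∏ i, A i i) := by
    rw [RingHom.map_det, map_prod]
    apply Matrix.det_of_upperTriangular
    intro i j hij
    exact Ideal.Quotient.eq_zero_iff_mem.2 (hl i j hij)
  have h2 : ∏ i, A i i - A.det ∈ a := Ideal.Quotient.eq.1 h1.symm
  have h3 := h _ _ hA h2
  rw [add_sub_cancel] at h3
  exact isUnit_of_dvd_unit (Finset.dvd_prod_of_mem (fun i => A i i) (Finset.mem_univ i)) h3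

/-! ### The ring of pairs at distance at most `q` -/

/-- Pairs `(x, y)` with `x` within `q` of `ι y`. -/
def pairRing {p : ℕ} [Fact p.Prime] {C : Type*} [NormedField C] [IsUltrametricDist C]
    (ι : ℤ_[p] →+* C) (hι : ∀ x : ℤ_[p], ‖ι x‖ = ‖x‖) (q : ℝ) (hq0 : 0 ≤ q) (hq1 : q < 1) :
    Subring (C × ℤ_[p]) where
  carrier := {z | ‖z.1 - ι z.2‖ ≤ q}
  zero_mem' := by simpa using hq0
  one_mem' := by simpa using hq0
  add_mem' := by
    intro x y hx hy
    have : (x + y).1 - ι (x + y).2 = (x.1 - ι x.2) + (y.1 - ι y.2) := by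
      simp; ring
    simp only [Set.mem_ofPred_eq, this] at *
    exact (IsUltrametricDist.norm_add_le_max _ _).trans (max_le hx hy)
  neg_mem' := by
    intro x hx
    have : (-x).1 - ι (-x).2 = -(x.1 - ι x.2) := by
      simp; ring
    simp only [Set.mem_ofPred_eq, this, norm_neg] at *
    exact hx
  mul_mem' := by
    intro x y hx hy
    have e : (x * y).1 - ι (x * y).2 =
      (x.1 - ι x.2) * (y.1 - ι y.2) + ((x.1 - ι x.2) * ι y.2 + ι x.2 * (y.1 - ι y.2)) := by
      simp; ring
    simp only [Set.mem_ofPred_eq, e] at *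
    have hx2 : ‖ι x.2‖ ≤ 1 := by rw [hι]; exact PadicInt.norm_le_one _
    have hy2 : ‖ι y.2‖ ≤ 1 := by rw [hι]; exact PadicInt.norm_le_one _
    refine (IsUltrametricDist.norm_add_le_max _ _).trans (max_le ?_
      ((IsUltrametricDist.norm_add_le_max _ _).trans (max_le ?_ ?_))) <;> rw [norm_mul]
    · exact (mul_le_of_le_one_right (norm_nonneg _) (hy.trans hq1.le)).trans hx
    · exact (mul_le_of_le_one_right (norm_nonneg _) hy2).trans hx
    · exact (mul_le_of_le_one_left (norm_nonneg _) hx2).trans hy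

section core
variable {p : ℕ} [Fact p.Prime] {C : Type*} [NormedField C] [IsUltrametricDist C]
    (ι : ℤ_[p] →+* C) (hι : ∀ x : ℤ_[p], ‖ι x‖ = ‖x‖) {q : ℝ} (hq0 : 0 ≤ q) (hq1 : q < 1)

theorem pair_norm_le {ι : ℤ_[p] →+* C} (hι : ∀ x : ℤ_[p], ‖ι x‖ = ‖x‖) {q : ℝ} (hq1 : q < 1)
    {x : C} {y : ℤ_[p]} (h : ‖x - ι y‖ ≤ q) : ‖x‖ ≤ 1 := by
  have : x = (x - ι y) + ι y := by ring
  rw [this]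
  refine (IsUltrametricDist.norm_add_le_max _ _).trans (max_le (h.trans hq1.le) ?_)
  rw [hι]; exact PadicInt.norm_le_one _

theorem pair_norm_eq {ι : ℤ_[p] →+* C} (hι : ∀ x : ℤ_[p], ‖ι x‖ = ‖x‖) {q : ℝ} (hq1 : q < 1)
    {x : C} {y : ℤ_[p]} (h : ‖x - ι y‖ ≤ q) (hy : IsUnit y) : ‖x‖ = 1 := by
  refine le_antisymm (pair_norm_le hι hq1 h) ?_
  by_contra hx
  push Not at hx
  have h1 : ‖ι y‖ = 1 := by rw [hι]; exact PadicInt.isUnit_iff.1 hy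
  have h2 : ι y = x + -(x - ι y) := by ring
  have h3 : ‖ι y‖ < 1 := by
    rw [h2]
    refine (IsUltrametricDist.norm_add_le_max _ _).trans_lt (max_lt hx ?_)
    rw [norm_neg]
    exact h.trans_lt hq1
  exact h3.ne h1

theorem pair_isUnit (z : pairRing ι hι q hq0 hq1) (hz : IsUnit z.1.2) : IsUnit z := by
  obtain ⟨y', hy'⟩ := hz.exists_right_inv
  have hx := pair_norm_eq hι hq1 z.2 hz
  have hx0 : z.1.1 ≠ 0 := by
    intro h0; rw [h0, norm_zero] at hx; exact zero_ne_one hx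
  have hi : ι z.1.2 * ι y' = 1 := by rw [← map_mul, hy', map_one]
  refine IsUnit.of_mul_eq_one (⟨(z.1.1⁻¹, y'), ?_⟩ : pairRing ι hι q hq0 hq1) ?_
  · change ‖z.1.1⁻¹ - ι y'‖ ≤ q
    have e : z.1.1⁻¹ - ι y' = -(z.1.1⁻¹ * (z.1.1 - ι z.1.2) * ι y') := by
      field_simp
      linear_combination -hi
    rw [e, norm_neg, norm_mul, norm_mul, norm_inv, hx, inv_one, one_mul]
    have : ‖ι y'‖ ≤ 1 := by rw [hι]; exact PadicInt.norm_le_one _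
    exact (mul_le_of_le_one_right (norm_nonneg _) this).trans z.2
  · apply Subtype.ext
    apply Prod.ext
    · exact mul_inv_cancel₀ hx0
    · exact hy'

/-- First projection. -/
noncomputable def pairFst : pairRing ι hι q hq0 hq1 →+* C := (RingHom.fst C ℤ_[p]).comp (Subring.subtype _)

/-- Second projection. -/
noncomputable def pairSnd : pairRing ι hι q hq0 hq1 →+* ℤ_[p] :=
  (RingHom.snd C ℤ_[p]).comp (Subring.subtype _)

theorem pair_close (z : pairRing ι hι q hq0 hq1) :
    ‖pairFst ι hι hq0 hq1 z - ι (pairSnd ι hι hq0 hq1 z)‖ ≤ q := z.2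

theorem padic_unit_add (u x : ℤ_[p]) (hu : IsUnit u) (hx : x ∈ Ideal.span {(p : ℤ_[p])}) :
    IsUnit (u + x) := by
  rw [← PadicInt.maximalIdeal_eq_span_p] at hx
  by_contra hn
  have h1 : u + x ∈ IsLocalRing.maximalIdeal ℤ_[p] := hn
  have h2 : u ∈ IsLocalRing.maximalIdeal ℤ_[p] := by
    have := Ideal.sub_mem _ h1 hx
    rwa [add_sub_cancel_right] at this
  exact h2 hu

theorem core_iff (hι : ∀ x : ℤ_[p], ‖ι x‖ = ‖x‖) {q : ℝ} (hq0 : 0 ≤ q) (hq1 : q < 1) (b : Ideal ℤ_[p]) (g : ℕ) (M : Matrix (Fin g) (Fin g) C) :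
    ((∀ i j, ‖M i j‖ ≤ 1) ∧ ‖M.det‖ = 1 ∧ ∃ M' : Matrix (Fin g) (Fin g) ℤ_[p],
      (IsUnit M'.det ∧ (∀ i j : Fin g, j < i → (p : ℤ_[p]) ∣ M' i j) ∧
        ∀ i j : Fin g, i < j → M' i j ∈ b) ∧ ∀ i j, ‖M i j - ι (M' i j)‖ ≤ q) ↔
    ∃ ν : Matrix (Fin g) (Fin g) C, ((∀ i j : Fin g, i < j → ν i j = 0) ∧ (∀ i : Fin g, ν i i = 1) ∧
      (∀ i j, ‖ν i j‖ ≤ 1) ∧ ∃ M' ∈ UGLopp1 p g, ∀ i j, ‖ν i j - ι (M' i j)‖ ≤ q) ∧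
    ∃ τ : Matrix (Fin g) (Fin g) C, ((∀ i j : Fin g, i ≠ j → τ i j = 0) ∧ (∀ i j, ‖τ i j‖ ≤ 1) ∧
      ∃ M' ∈ TGL p g, ∀ i j, ‖τ i j - ι (M' i j)‖ ≤ q) ∧
    ∃ ν' : Matrix (Fin g) (Fin g) C, ((∀ i j : Fin g, j < i → ν' i j = 0) ∧
      (∀ i : Fin g, ν' i i = 1) ∧ (∀ i j, ‖ν' i j‖ ≤ 1) ∧
      ∃ M' : Matrix (Fin g) (Fin g) ℤ_[p], (M' ∈ UGL0 p g ∧ ∀ i j : Fin g, i < j → M' i j ∈ b) ∧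
        ∀ i j, ‖ν' i j - ι (M' i j)‖ ≤ q) ∧
    M = ν * τ * ν' := by
  constructor
  · rintro ⟨-, -, M', ⟨hdet, hl, hb⟩, hc⟩
    have hdiag := diag_isUnit (Ideal.span {(p : ℤ_[p])}) padic_unit_add M' hdet
      (fun i j hij => Ideal.mem_span_singleton.2 (hl i j hij))
    obtain ⟨L, t, U, hA, ht, hL1, hL0, hLa, hU1, hU0, hUb⟩ :=
      ldu_exists ((Ideal.span {(p : ℤ_[p])}).comap (pairSnd ι hι hq0 hq1))
        (b.comap (pairSnd ι hι hq0 hq1))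
        (fun u x hu hx => pair_isUnit ι hι hq0 hq1 _
          (padic_unit_add _ _ (hu.map (pairSnd ι hι hq0 hq1)) hx)) g
        (fun i j => ⟨(M i j, M' i j), hc i j⟩)
        (fun i => pair_isUnit ι hι hq0 hq1 _ (hdiag i))
        (fun i j hij => Ideal.mem_span_singleton.2 (hl i j hij))
        (fun i j hij => hb i j hij)
    have hcl := pair_close ι hι hq0 hq1
    set f := pairFst ι hι hq0 hq1 with hf
    set s := pairSnd ι hι hq0 hq1 with hs
    have hn : ∀ z, ‖f z‖ ≤ 1 := fun z => pair_norm_le hι hq1 (hcl z)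
    have hdi : ∀ i j, f (Matrix.diagonal t i j) = Matrix.diagonal (fun k => f (t k)) i j := by
      intro i j
      by_cases hij : i = j
      · subst hij; simp
      · simp [Matrix.diagonal_apply_ne _ hij]
    refine ⟨L.map f, ⟨?_, ?_, fun i j => hn _, L.map s, ⟨?_, ?_, ?_⟩, fun i j => hcl _⟩,
      (Matrix.diagonal t).map f, ⟨?_, fun i j => hn _, (Matrix.diagonal t).map s, ⟨?_, ?_⟩,
        fun i j => hcl _⟩,
      U.map f, ⟨?_, ?_, fun i j => hn _, U.map s, ⟨⟨?_, ?_⟩, ?_⟩, fun i j => hcl _⟩, ?_⟩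
    · intro i j hij; simp [hL0 i j hij]
    · intro i; simp [hL1]
    · intro i j hij; simp [hL0 i j hij]
    · intro i; simp [hL1]
    · intro i j hij; exact Ideal.mem_span_singleton.1 (hLa i j hij)
    · intro i j hij; simp [Matrix.diagonal_apply_ne _ hij]
    · have : ((Matrix.diagonal t).map s).det = s (Matrix.diagonal t).det :=
        (RingHom.map_det s _).symm
      rw [this, Matrix.det_diagonal]
      exact (IsUnit.prod_univ_iff.2 ht).map s
    · intro i j hij; simp [Matrix.diagonal_apply_ne _ hij]
    · intro i j hij; simp [hU0 i j hij]
    · intro i; simp [hU1]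
    · intro i j hij; simp [hU0 i j hij]
    · intro i; simp [hU1]
    · intro i j hij; exact hUb i j hij
    · rw [← Matrix.map_mul, ← Matrix.map_mul]
      ext i j
      rw [Matrix.map_apply, Matrix.mul_apply]
      simp only [Matrix.mul_diagonal]
      rw [← hA i j]
      rfl
  · rintro ⟨ν, ⟨-, -, -, L, ⟨hL0, hL1, hLa⟩, hLc⟩, τ, ⟨-, -, T, ⟨hTd, hT0⟩, hTc⟩,
      ν', ⟨-, -, -, U, ⟨⟨hU0, hU1⟩, hUb⟩, hUc⟩, rfl⟩
    let L' : Matrix (Fin g) (Fin g) (pairRing ι hι q hq0 hq1) := fun i j => ⟨(ν i j, L i j), hLc i j⟩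
    let T' : Matrix (Fin g) (Fin g) (pairRing ι hι q hq0 hq1) := fun i j => ⟨(τ i j, T i j), hTc i j⟩
    let U' : Matrix (Fin g) (Fin g) (pairRing ι hι q hq0 hq1) :=
      fun i j => ⟨(ν' i j, U i j), hUc i j⟩
    have hcl := pair_close ι hι hq0 hq1
    set f := pairFst ι hι hq0 hq1 with hf
    set s := pairSnd ι hι hq0 hq1 with hs
    have e1 : ν * τ * ν' = (L' * T' * U').map f := by
      rw [Matrix.map_mul, Matrix.map_mul]; rfl
    have e2 : L * T * U = (L' * T' * U').map s := by
      rw [Matrix.map_mul, Matrix.map_mul]; rfl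
    have hdet : IsUnit (L * T * U).det := by
      rw [Matrix.det_mul, Matrix.det_mul, Matrix.det_of_lowerTriangular L (fun i j hij => hL0 i j hij),
        Matrix.det_of_upperTriangular (M := U) (fun i j hij => hU0 i j hij)]
      simpa [hL1, hU1] using hTd
    have hent : ∀ i j, (L * T * U) i j = ∑ k, L i k * T k k * U k j := by
      intro i j
      rw [Matrix.mul_apply]
      refine Finset.sum_congr rfl fun k _ => ?_
      rw [Matrix.mul_apply, Finset.sum_eq_single k]
      · intro m _ hm; rw [hT0 m k hm, mul_zero]
      · intro hk; exact absurd (Finset.mem_univ k) hk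
    have hclose : ∀ i j, ‖(ν * τ * ν') i j - ι ((L * T * U) i j)‖ ≤ q := by
      intro i j
      rw [e1, e2]
      exact hcl _
    refine ⟨fun i j => pair_norm_le hι hq1 (hclose i j), ?_, L * T * U, ⟨hdet, ?_, ?_⟩, hclose⟩
    · refine pair_norm_eq hι hq1 (y := (L * T * U).det) ?_ hdet
      have d1 : (ν * τ * ν').det = f (L' * T' * U').det := by
        rw [e1]; exact (RingHom.map_det f _).symm
      have d2 : (L * T * U).det = s (L' * T' * U').det := by
        rw [e2]; exact (RingHom.map_det s _).symm
      rw [d1, d2]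
      exact hcl _
    · intro i j hij
      rw [hent]
      refine Finset.dvd_sum fun k _ => ?_
      rcases lt_or_ge k i with hk | hk
      · exact Dvd.dvd.mul_right (Dvd.dvd.mul_right (hLa i k hk) _) _
      · rw [hU0 k j (hij.trans_le hk), mul_zero]; exact dvd_zero _
    · intro i j hij
      rw [hent]
      refine b.sum_mem fun k _ => ?_
      rcases lt_or_ge i k with hk | hk
      · rw [hL0 i k hk, zero_mul, zero_mul]; exact b.zero_mem
      · exact b.mul_mem_left _ (hUb k j (hk.trans_lt hij))

end core

theorem statement3 (p g : ℕ) [Fact p.Prime] (hg : 1 ≤ g) (C : Type*)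
    [NormedField C] [CompleteSpace C] [IsUltrametricDist C] (ι : ℤ_[p] →+* C)
    (hι : ∀ x : ℤ_[p], ‖ι x‖ = ‖x‖) (w : ℚ) (hw : 0 < w) :
    (∀ M : Matrix (Fin g) (Fin g) C,
      M ∈ IwW p g C ι w ↔
        ∃ ν ∈ UoppW1 p g C ι w, ∃ τ ∈ TW p g C ι w, ∃ ν' ∈ UW0 p g C ι w,
          M = ν * τ * ν') ∧
    ∀ M : Matrix (Fin g) (Fin g) C,
      M ∈ IwWplus p g C ι w ↔
        ∃ ν ∈ UoppW1 p g C ι w, ∃ τ ∈ TW p g C ι w, ∃ ν' ∈ UW1 p g C ι w,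
          M = ν * τ * ν' := by
  have hp1 : (1 : ℝ) < p := by exact_mod_cast (Fact.out : p.Prime).one_lt
  have hq0 : 0 ≤ pw p w := Real.rpow_nonneg (by positivity) _
  have hq1 : pw p w < 1 := by
    apply Real.rpow_lt_one_of_one_lt_of_neg hp1
    have : (0 : ℝ) < w := by exact_mod_cast hw
    linarith
  constructor
  · intro M
    refine Iff.trans ?_ ((core_iff ι hι hq0 hq1 ⊤ g M).trans ?_)
    · simp [IwW, IwGL]
    · simp [UoppW1, TW, UW0]
  · intro M
    refine Iff.trans ?_ ((core_iff ι hι hq0 hq1 (Ideal.span {(p : ℤ_[p])}) g M).trans ?_)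
    · have : ∀ M' : Matrix (Fin g) (Fin g) ℤ_[p], (∀ i j : Fin g, i ≠ j → (p : ℤ_[p]) ∣ M' i j) ↔
          ((∀ i j : Fin g, j < i → (p : ℤ_[p]) ∣ M' i j) ∧
            ∀ i j : Fin g, i < j → (p : ℤ_[p]) ∣ M' i j) := by
        intro M'
        constructor
        · intro h
          exact ⟨fun i j hij => h i j hij.ne', fun i j hij => h i j hij.ne⟩
        · rintro ⟨h1, h2⟩ i j hij
          rcases lt_or_gt_of_ne hij with h | h
          · exact h2 i j h
          · exact h1 i j h
      simp only [IwWplus, IwGLplus, Set.mem_ofPred_eq, this, Ideal.mem_span_singleton]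
    · simp only [UoppW1, TW, UW1, UGL1, Set.mem_ofPred_eq, Ideal.mem_span_singleton]
end

section
/- Let w ∈ ℚ_{>0} and let z ∈ M_g(O_C) be such that there exists z₀ ∈ M_g(ℤ_p) with |z_{ij} − (z₀)_{ij}| ≤ p^{−w} for all i, j. Then for every γ ∈ Iw_{GSp_{2g}}: (i) the matrix γ_a + zγ_c is invertible in M_g(O_C); (ii) the matrix z·γ := (γ_a + zγ_c)^{−1}(γ_b + zγ_d) has entries in O_C and there exists z₀' ∈ M_g(ℤ_p) with |(z·γ)_{ij} − (z₀')_{ij}| ≤ p^{−w} for all i, j; (iii) for all γ, γ' ∈ Iw_{GSp_{2g}} one has (z·γ)·γ' = z·(γγ'), so these formulas define a right action of Iw_{GSp_{2g}} on the set of such matrices z. -/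
open Matrix

/-- The Iwahori subgroup `Iw_{GSp_{2g}}` of `GSp_{2g}(ℤ_p)`: reduction mod `p`
is upper triangular. -/
def IwGSp (p g : ℕ) [Fact p.Prime] :
    Set (Matrix (Fin g ⊕ Fin g) (Fin g ⊕ Fin g) ℤ_[p]) :=
  {M | IsGSp M ∧ ∀ a b : Fin g ⊕ Fin g, idx b < idx a → (p : ℤ_[p]) ∣ M a b}

/-- The action `z · γ = (γ_a + zγ_c)⁻¹ (γ_b + zγ_d)` of a `2g × 2g` matrix over `ℤ_p`
on a `g × g` coordinate matrix over `C`. -/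
noncomputable def zAct (p g : ℕ) [Fact p.Prime] (C : Type*) [NormedField C]
    (ι : ℤ_[p] →+* C) (z : Matrix (Fin g) (Fin g) C)
    (γ : Matrix (Fin g ⊕ Fin g) (Fin g ⊕ Fin g) ℤ_[p]) :
    Matrix (Fin g) (Fin g) C :=
  ((γ.toBlocks₁₁.map fun x => ι x) + z * (γ.toBlocks₂₁.map fun x => ι x))⁻¹ *
    ((γ.toBlocks₁₂.map fun x => ι x) + z * (γ.toBlocks₂₂.map fun x => ι x))

section Helpers

variable {p g : ℕ} [Fact p.Prime] {C : Type*} [NormedField C] [IsUltrametricDist C]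

lemma aux_norm_sum {α : Type*} (s : Finset α) (f : α → C) (r : ℝ) (hr : 0 ≤ r)
    (h : ∀ i ∈ s, ‖f i‖ ≤ r) : ‖∑ i ∈ s, f i‖ ≤ r :=
  IsUltrametricDist.norm_sum_le_of_forall_le_of_nonneg hr h

lemma aux_norm_mul {m : Type*} [Fintype m] (A B : Matrix m m C) (r s : ℝ) (hr : 0 ≤ r)
    (hs : 0 ≤ s) (hA : ∀ i j, ‖A i j‖ ≤ r) (hB : ∀ i j, ‖B i j‖ ≤ s) (i j : m) :
    ‖(A * B) i j‖ ≤ r * s := by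
  rw [Matrix.mul_apply]
  refine aux_norm_sum _ _ _ (mul_nonneg hr hs) fun k _ => ?_
  rw [norm_mul]
  exact mul_le_mul (hA _ _) (hB _ _) (norm_nonneg _) hr

lemma aux_norm_add (x y : C) (r : ℝ) (hx : ‖x‖ ≤ r) (hy : ‖y‖ ≤ r) : ‖x + y‖ ≤ r :=
  (IsUltrametricDist.norm_add_le_max x y).trans (max_le hx hy)

lemma aux_norm_sub (x y : C) (r : ℝ) (hx : ‖x‖ ≤ r) (hy : ‖y‖ ≤ r) : ‖x - y‖ ≤ r := by
  rw [sub_eq_add_neg]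
  exact aux_norm_add _ _ _ hx (by rwa [norm_neg])

lemma aux_norm_prod_le {α : Type*} (s : Finset α) (f : α → C) (h : ∀ i ∈ s, ‖f i‖ ≤ 1) :
    ‖∏ i ∈ s, f i‖ ≤ 1 := by
  rw [norm_prod]
  exact Finset.prod_le_one (fun _ _ => norm_nonneg _) h

lemma aux_norm_sign {m : Type*} [Fintype m] [DecidableEq m] (σ : Equiv.Perm m) (x : C) :
    ‖Equiv.Perm.sign σ • x‖ = ‖x‖ := by
  rcases Int.units_eq_one_or (Equiv.Perm.sign σ) with h | h <;> simp [h]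

lemma aux_norm_det {m : Type*} [Fintype m] [DecidableEq m] (A : Matrix m m C)
    (hA : ∀ i j, ‖A i j‖ ≤ 1) : ‖A.det‖ ≤ 1 := by
  rw [Matrix.det_apply]
  refine aux_norm_sum _ _ _ zero_le_one fun σ _ => ?_
  rw [aux_norm_sign]
  exact aux_norm_prod_le _ _ fun i _ => hA _ _

lemma aux_prod_sub {α : Type*} (s : Finset α) (f h : α → C) (r : ℝ) (hr : 0 ≤ r)
    (hf : ∀ i, ‖f i‖ ≤ 1) (hh : ∀ i, ‖h i‖ ≤ 1) (hd : ∀ i, ‖f i - h i‖ ≤ r) :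
    ‖∏ i ∈ s, f i - ∏ i ∈ s, h i‖ ≤ r := by
  classical
  induction s using Finset.induction_on with
  | empty => simpa using hr
  | insert a s ha ih =>
    rw [Finset.prod_insert ha, Finset.prod_insert ha]
    have : f a * ∏ i ∈ s, f i - h a * ∏ i ∈ s, h i
        = (f a - h a) * ∏ i ∈ s, f i + h a * (∏ i ∈ s, f i - ∏ i ∈ s, h i) := by ring
    rw [this]
    refine aux_norm_add _ _ _ ?_ ?_
    · rw [norm_mul]
      simpa using mul_le_mul (hd a) (aux_norm_prod_le s f fun i _ => hf i) (norm_nonneg _) hr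
    · rw [norm_mul]
      simpa using mul_le_mul (hh a) ih (norm_nonneg _) zero_le_one

lemma aux_det_sub {m : Type*} [Fintype m] [DecidableEq m] (A B : Matrix m m C) (r : ℝ)
    (hr : 0 ≤ r) (hA : ∀ i j, ‖A i j‖ ≤ 1) (hB : ∀ i j, ‖B i j‖ ≤ 1)
    (hd : ∀ i j, ‖A i j - B i j‖ ≤ r) : ‖A.det - B.det‖ ≤ r := by
  rw [Matrix.det_apply, Matrix.det_apply, ← Finset.sum_sub_distrib]
  refine aux_norm_sum _ _ _ hr fun σ _ => ?_
  rw [← smul_sub, aux_norm_sign]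
  exact aux_prod_sub _ _ _ _ hr (fun i => hA _ _) (fun i => hB _ _) (fun i => hd _ _)

lemma aux_norm_inv {m : Type*} [Fintype m] [DecidableEq m] (A : Matrix m m C)
    (hA : ∀ i j, ‖A i j‖ ≤ 1) (hdet : ‖A.det‖ = 1) (i j : m) : ‖A⁻¹ i j‖ ≤ 1 := by
  rw [Matrix.inv_def, Matrix.smul_apply, smul_eq_mul, norm_mul, Ring.inverse_eq_inv', norm_inv,
    hdet, inv_one, one_mul, Matrix.adjugate_apply]
  refine aux_norm_det _ fun a b => ?_
  rw [Matrix.updateRow_apply]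
  split_ifs
  · rw [Pi.single_apply]
    split_ifs <;> simp
  · exact hA _ _

lemma aux_unit_det (γ : Matrix (Fin g ⊕ Fin g) (Fin g ⊕ Fin g) ℤ_[p]) (hγ : γ ∈ IwGSp p g) :
    IsUnit γ.toBlocks₁₁.det := by
  obtain ⟨⟨hu, -⟩, ht⟩ := hγ
  have h0 : (γ.map (PadicInt.toZMod (p := p))) = Matrix.fromBlocks
      (γ.toBlocks₁₁.map (PadicInt.toZMod (p := p))) (γ.toBlocks₁₂.map (PadicInt.toZMod (p := p)))
      0 (γ.toBlocks₂₂.map (PadicInt.toZMod (p := p))) := by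
    conv_lhs => rw [← Matrix.fromBlocks_toBlocks γ]
    rw [Matrix.fromBlocks_map]
    congr 1
    ext i j
    obtain ⟨c, hc⟩ := ht (Sum.inr i) (Sum.inl j) (by simp [idx]; omega)
    simp [Matrix.toBlocks₂₁, hc]
  have h1 := hu.map (PadicInt.toZMod (p := p))
  rw [RingHom.map_det, RingHom.mapMatrix_apply, h0, Matrix.det_fromBlocks_zero₂₁] at h1
  have h2 := isUnit_of_mul_isUnit_left h1
  rw [← RingHom.mapMatrix_apply, ← RingHom.map_det] at h2
  by_contra hn
  have : γ.toBlocks₁₁.det ∈ IsLocalRing.maximalIdeal ℤ_[p] := hn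
  rw [← PadicInt.ker_toZMod, RingHom.mem_ker] at this
  exact h2.ne_zero this

lemma aux_det (ι : ℤ_[p] →+* C) (hι : ∀ x : ℤ_[p], ‖ι x‖ = ‖x‖)
    (z : Matrix (Fin g) (Fin g) C) (hz : ∀ i j, ‖z i j‖ ≤ 1)
    (γ : Matrix (Fin g ⊕ Fin g) (Fin g ⊕ Fin g) ℤ_[p]) (hγ : γ ∈ IwGSp p g) :
    (∀ i j, ‖((γ.toBlocks₁₁.map fun x => ι x) +
          z * (γ.toBlocks₂₁.map fun x => ι x)) i j‖ ≤ 1) ∧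
        ‖((γ.toBlocks₁₁.map fun x => ι x) +
          z * (γ.toBlocks₂₁.map fun x => ι x)).det‖ = 1 := by
  have hp1 : ‖(p : ℤ_[p])‖ < 1 := PadicInt.norm_lt_one_iff_dvd _ |>.2 dvd_rfl
  have hA : ∀ i j, ‖(γ.toBlocks₁₁.map fun x => ι x) i j‖ ≤ 1 := fun i j => by
    rw [Matrix.map_apply, hι]; exact PadicInt.norm_le_one _
  have hc : ∀ i j, ‖(γ.toBlocks₂₁.map fun x => ι x) i j‖ ≤ ‖(p : ℤ_[p])‖ := fun i j => by
    rw [Matrix.map_apply, hι]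
    obtain ⟨c, hc⟩ := hγ.2 (Sum.inr i) (Sum.inl j) (by simp [idx]; omega)
    have : γ.toBlocks₂₁ i j = p * c := hc
    rw [this, norm_mul]
    exact mul_le_of_le_one_right (norm_nonneg _) (PadicInt.norm_le_one _)
  have hzc := aux_norm_mul z (γ.toBlocks₂₁.map fun x => ι x) 1 _ zero_le_one (norm_nonneg _) hz hc
  rw [one_mul] at hzc
  have hN : ∀ i j, ‖((γ.toBlocks₁₁.map fun x => ι x) +
          z * (γ.toBlocks₂₁.map fun x => ι x)) i j‖ ≤ 1 := fun i j =>
    aux_norm_add _ _ _ (hA i j) ((hzc i j).trans hp1.le)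
  refine ⟨hN, ?_⟩
  have hd := aux_det_sub _ _ _ (norm_nonneg _) hN hA
    (fun i j => by rw [Matrix.add_apply, add_sub_cancel_left]; exact hzc i j)
  have hu : ‖(γ.toBlocks₁₁.map fun x => ι x).det‖ = 1 := by
    have := ι.map_det γ.toBlocks₁₁
    rw [RingHom.mapMatrix_apply] at this
    rw [← this, hι]
    exact PadicInt.isUnit_iff.1 (aux_unit_det γ hγ)
  refine le_antisymm (aux_norm_det _ hN) ?_
  by_contra hlt
  push Not at hlt
  have h3 := aux_norm_sub _ _ _ ((le_max_left _ _ : _ ≤ max _ ‖(p : ℤ_[p])‖))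
    (hd.trans (le_max_right
      ‖((γ.toBlocks₁₁.map fun x => ι x) + z * (γ.toBlocks₂₁.map fun x => ι x)).det‖ _))
  rw [sub_sub_cancel, hu] at h3
  exact absurd h3 (not_le.2 (max_lt hlt hp1))

end Helpers

theorem statement7 (p g : ℕ) [Fact p.Prime] (hg : 1 ≤ g) (C : Type*)
    [NormedField C] [CompleteSpace C] [IsUltrametricDist C] (ι : ℤ_[p] →+* C)
    (hι : ∀ x : ℤ_[p], ‖ι x‖ = ‖x‖) (w : ℚ) (hw : 0 < w)
    (z : Matrix (Fin g) (Fin g) C) (hzint : ∀ i j, ‖z i j‖ ≤ 1)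
    (z₀ : Matrix (Fin g) (Fin g) ℤ_[p])
    (hz : ∀ i j, ‖z i j - ι (z₀ i j)‖ ≤ pw p w) :
    (∀ γ ∈ IwGSp p g,
      (∀ i j, ‖((γ.toBlocks₁₁.map fun x => ι x) +
          z * (γ.toBlocks₂₁.map fun x => ι x)) i j‖ ≤ 1) ∧
        ‖((γ.toBlocks₁₁.map fun x => ι x) +
          z * (γ.toBlocks₂₁.map fun x => ι x)).det‖ = 1) ∧
    (∀ γ ∈ IwGSp p g,
      (∀ i j, ‖zAct p g C ι z γ i j‖ ≤ 1) ∧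
        ∃ z₀' : Matrix (Fin g) (Fin g) ℤ_[p],
          ∀ i j, ‖zAct p g C ι z γ i j - ι (z₀' i j)‖ ≤ pw p w) ∧
    ∀ γ ∈ IwGSp p g, ∀ γ' ∈ IwGSp p g,
      zAct p g C ι (zAct p g C ι z γ) γ' = zAct p g C ι z (γ * γ') := by
  have hpw : 0 ≤ pw p w := Real.rpow_nonneg (Nat.cast_nonneg _) _
  have hint : ∀ (A : Matrix (Fin g) (Fin g) ℤ_[p]) (i j), ‖(A.map fun x => ι x) i j‖ ≤ 1 :=
    fun A i j => by rw [Matrix.map_apply, hι]; exact PadicInt.norm_le_one _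
  have hP : ∀ y : Matrix (Fin g) (Fin g) C, (∀ i j, ‖y i j‖ ≤ 1) →
      ∀ γ : Matrix (Fin g ⊕ Fin g) (Fin g ⊕ Fin g) ℤ_[p], ∀ i j,
      ‖((γ.toBlocks₁₂.map fun x => ι x) + y * (γ.toBlocks₂₂.map fun x => ι x)) i j‖ ≤ 1 := by
    intro y hy γ i j
    refine aux_norm_add _ _ _ (hint _ _ _) ?_
    simpa using aux_norm_mul y _ 1 1 zero_le_one zero_le_one hy (hint γ.toBlocks₂₂) i j
  have hact : ∀ y : Matrix (Fin g) (Fin g) C, (∀ i j, ‖y i j‖ ≤ 1) → ∀ γ ∈ IwGSp p g,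
      ∀ i j, ‖zAct p g C ι y γ i j‖ ≤ 1 := by
    intro y hy γ hγ i j
    obtain ⟨h1, h2⟩ := aux_det ι hι y hy γ hγ
    rw [zAct]
    simpa using aux_norm_mul _ _ 1 1 zero_le_one zero_le_one (aux_norm_inv _ h1 h2) (hP y hy γ) i j
  have hunit : ∀ y : Matrix (Fin g) (Fin g) C, (∀ i j, ‖y i j‖ ≤ 1) → ∀ γ ∈ IwGSp p g,
      IsUnit ((γ.toBlocks₁₁.map fun x => ι x) + y * (γ.toBlocks₂₁.map fun x => ι x)).det := by
    intro y hy γ hγ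
    rw [isUnit_iff_ne_zero, ← norm_ne_zero_iff, (aux_det ι hι y hy γ hγ).2]
    exact one_ne_zero
  have hmul : ∀ y : Matrix (Fin g) (Fin g) C, (∀ i j, ‖y i j‖ ≤ 1) → ∀ γ ∈ IwGSp p g,
      ((γ.toBlocks₁₁.map fun x => ι x) + y * (γ.toBlocks₂₁.map fun x => ι x)) * zAct p g C ι y γ
      = (γ.toBlocks₁₂.map fun x => ι x) + y * (γ.toBlocks₂₂.map fun x => ι x) := by
    intro y hy γ hγ
    rw [zAct, Matrix.mul_nonsing_inv_cancel_left _ _ (hunit y hy γ hγ)]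
  refine ⟨fun γ hγ => aux_det ι hι z hzint γ hγ, fun γ hγ => ⟨hact z hzint γ hγ, ?_⟩, ?_⟩
  · -- the integral approximation is `z₀ · γ`
    have hy := hint z₀
    set y : Matrix (Fin g) (Fin g) C := z₀.map fun x => ι x with hydef
    have hmap : ∀ A B : Matrix (Fin g) (Fin g) ℤ_[p],
        ((A + z₀ * B).map fun x => ι x) = (A.map fun x => ι x) + y * (B.map fun x => ι x) := by
      intro A B
      have := ι.mapMatrix.map_add A (z₀ * B)
      rw [ι.mapMatrix.map_mul] at this
      exact this
    have hN0 : IsUnit (γ.toBlocks₁₁ + z₀ * γ.toBlocks₂₁).det := by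
      rw [PadicInt.isUnit_iff, ← hι, ι.map_det]
      have := hmap γ.toBlocks₁₁ γ.toBlocks₂₁
      rw [RingHom.mapMatrix_apply]
      refine Eq.trans ?_ (aux_det ι hι y hy γ hγ).2
      rw [← this]
    let x₀ := (γ.toBlocks₁₁ + z₀ * γ.toBlocks₂₁)⁻¹ * (γ.toBlocks₁₂ + z₀ * γ.toBlocks₂₂)
    have hx₀ : (γ.toBlocks₁₁ + z₀ * γ.toBlocks₂₁) * x₀ = γ.toBlocks₁₂ + z₀ * γ.toBlocks₂₂ :=
      Matrix.mul_nonsing_inv_cancel_left _ _ hN0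
    have hx₁ : ((γ.toBlocks₁₁.map fun x => ι x) + y * (γ.toBlocks₂₁.map fun x => ι x)) *
        (x₀.map fun x => ι x)
        = (γ.toBlocks₁₂.map fun x => ι x) + y * (γ.toBlocks₂₂.map fun x => ι x) := by
      rw [← hmap, ← hmap, ← hx₀]
      exact (ι.mapMatrix.map_mul _ _).symm
    refine ⟨x₀, ?_⟩
    obtain ⟨h1, h2⟩ := aux_det ι hι z hzint γ hγ
    have hzy : ∀ i j, ‖(z - y) i j‖ ≤ pw p w := hz
    have hm := hmul z hzint γ hγ
    have hu := hunit z hzint γ hγ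
    set X := zAct p g C ι z γ
    set X₀ : Matrix (Fin g) (Fin g) C := x₀.map fun x => ι x with hX₀
    have hX₀i : ∀ i j, ‖X₀ i j‖ ≤ 1 := hint x₀
    set a := (γ.toBlocks₁₁.map fun x => ι x)
    set b := (γ.toBlocks₁₂.map fun x => ι x)
    have hci := hint γ.toBlocks₂₁
    have hdi := hint γ.toBlocks₂₂
    set c := (γ.toBlocks₂₁.map fun x => ι x)
    set d := (γ.toBlocks₂₂.map fun x => ι x)
    have key : (a + z * c) * (X - X₀) = (z - y) * d - (z - y) * c * X₀ := by
      have e : (a + z * c) * X₀ = (a + y * c) * X₀ + (z - y) * c * X₀ := by noncomm_ring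
      rw [mul_sub, hm, e, hx₁]
      noncomm_ring
    have hE : ∀ i j, ‖((z - y) * d - (z - y) * c * X₀) i j‖ ≤ pw p w := by
      intro i j
      refine aux_norm_sub _ _ _ ?_ ?_
      · simpa using aux_norm_mul (z - y) d _ 1 hpw zero_le_one hzy hdi i j
      · have h := aux_norm_mul (z - y) c _ 1 hpw zero_le_one hzy hci
        rw [mul_one] at h
        simpa using aux_norm_mul _ X₀ _ 1 hpw zero_le_one h hX₀i i j
    have hfin : X - X₀ = (a + z * c)⁻¹ * ((z - y) * d - (z - y) * c * X₀) := by
      rw [← key, Matrix.nonsing_inv_mul_cancel_left _ _ hu]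
    intro i j
    have : X i j - ι (x₀ i j) = (X - X₀) i j := rfl
    rw [this, hfin]
    simpa using aux_norm_mul _ _ 1 _ zero_le_one hpw (aux_norm_inv _ h1 h2) hE i j
  · intro γ hγ γ' hγ'
    have hm := hmul z hzint γ hγ
    have hu := hunit z hzint γ hγ
    set X := zAct p g C ι z γ
    have hb : γ * γ' = Matrix.fromBlocks
        (γ.toBlocks₁₁ * γ'.toBlocks₁₁ + γ.toBlocks₁₂ * γ'.toBlocks₂₁)
        (γ.toBlocks₁₁ * γ'.toBlocks₁₂ + γ.toBlocks₁₂ * γ'.toBlocks₂₂)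
        (γ.toBlocks₂₁ * γ'.toBlocks₁₁ + γ.toBlocks₂₂ * γ'.toBlocks₂₁)
        (γ.toBlocks₂₁ * γ'.toBlocks₁₂ + γ.toBlocks₂₂ * γ'.toBlocks₂₂) := by
      rw [← Matrix.fromBlocks_multiply, Matrix.fromBlocks_toBlocks, Matrix.fromBlocks_toBlocks]
    have hmap : ∀ A B A' B' : Matrix (Fin g) (Fin g) ℤ_[p],
        ((A * A' + B * B').map fun x => ι x) = (A.map fun x => ι x) * (A'.map fun x => ι x)
          + (B.map fun x => ι x) * (B'.map fun x => ι x) := by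
      intro A B A' B'
      have := ι.mapMatrix.map_add (A * A') (B * B')
      rw [ι.mapMatrix.map_mul, ι.mapMatrix.map_mul] at this
      exact this
    rw [zAct, zAct, hb]
    simp only [Matrix.toBlocks_fromBlocks₁₁, Matrix.toBlocks_fromBlocks₁₂,
      Matrix.toBlocks_fromBlocks₂₁, Matrix.toBlocks_fromBlocks₂₂, hmap]
    set a := (γ.toBlocks₁₁.map fun x => ι x)
    set b := (γ.toBlocks₁₂.map fun x => ι x)
    set c := (γ.toBlocks₂₁.map fun x => ι x)
    set d := (γ.toBlocks₂₂.map fun x => ι x)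
    have key : ∀ s t : Matrix (Fin g) (Fin g) C,
        a * s + b * t + z * (c * s + d * t) = (a + z * c) * (s + X * t) := by
      intro s t
      rw [mul_add (a + z * c), ← mul_assoc (a + z * c) X t, hm]
      noncomm_ring
    rw [key, key, Matrix.mul_inv_rev, mul_assoc, Matrix.nonsing_inv_mul_cancel_left _ _ hu]
end

section
/- Let w ∈ ℚ_{>0} and let z ∈ M_g(O_C) be such that there exists z₀ ∈ M_g(ℤ_p) with |z_{ij} − (z₀)_{ij}| ≤ p^{−w} for all i, j. Then for every γ ∈ Iw⁺_{GSp_{2g}} one has γ_a + zγ_c ∈ Iw^{+,(w)}_{GL_g}, i.e. there exists λ' ∈ Iw⁺_{GL_g} with |(γ_a + zγ_c)_{ij} − λ'_{ij}| ≤ p^{−w} for all i, j. -/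
open Matrix

theorem statement8 (p g : ℕ) [Fact p.Prime] (hg : 1 ≤ g) (C : Type*)
    [NormedField C] [CompleteSpace C] [IsUltrametricDist C] (ι : ℤ_[p] →+* C)
    (hι : ∀ x : ℤ_[p], ‖ι x‖ = ‖x‖) (w : ℚ) (hw : 0 < w)
    (z : Matrix (Fin g) (Fin g) C) (hzint : ∀ i j, ‖z i j‖ ≤ 1)
    (z₀ : Matrix (Fin g) (Fin g) ℤ_[p])
    (hz : ∀ i j, ‖z i j - ι (z₀ i j)‖ ≤ pw p w) :
    ∀ γ ∈ IwGSpPlus p g, ∃ l' ∈ IwGLplus p g,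
      ∀ i j, ‖((γ.toBlocks₁₁.map fun x => ι x) +
        z * (γ.toBlocks₂₁.map fun x => ι x)) i j - ι (l' i j)‖ ≤ pw p w := by
  intro γ hγ
  obtain ⟨⟨hdet, -⟩, hc, ha, -⟩ := hγ
  have hpos : 0 ≤ pw p w := by unfold pw; positivity
  refine ⟨γ.toBlocks₁₁ + z₀ * γ.toBlocks₂₁, ⟨?_, ?_⟩, ?_⟩
  · let φ := IsLocalRing.residue ℤ_[p]
    have hp : φ (p : ℤ_[p]) = 0 := by
      rw [IsLocalRing.residue_eq_zero_iff, IsLocalRing.mem_maximalIdeal]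
      exact PadicInt.p_nonunit
    have h0 : γ.toBlocks₂₁.map φ = 0 := by
      ext i j
      obtain ⟨c, h⟩ := hc i j
      simp [Matrix.toBlocks₂₁, h, hp]
    have h1 : IsUnit (φ γ.det) := hdet.map φ
    rw [← Matrix.fromBlocks_toBlocks γ, RingHom.map_det, RingHom.mapMatrix_apply,
      Matrix.fromBlocks_map, h0, Matrix.det_fromBlocks_zero₂₁] at h1
    apply isUnit_of_map_unit φ
    rw [RingHom.map_det, map_add, map_mul, RingHom.mapMatrix_apply, RingHom.mapMatrix_apply,
      RingHom.mapMatrix_apply, h0, mul_zero, add_zero]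
    exact isUnit_of_mul_isUnit_left h1
  · intro i j hij
    rw [Matrix.add_apply, Matrix.mul_apply]
    exact dvd_add (ha i j hij) (Finset.dvd_sum fun k _ => Dvd.dvd.mul_left (hc k j) _)
  · intro i j
    have : ((γ.toBlocks₁₁.map fun x => ι x) +
        z * (γ.toBlocks₂₁.map fun x => ι x)) i j - ι ((γ.toBlocks₁₁ + z₀ * γ.toBlocks₂₁) i j)
        = ∑ k, (z i k - ι (z₀ i k)) * ι (γ.toBlocks₂₁ k j) := by
      simp only [Matrix.add_apply, Matrix.mul_apply, Matrix.map_apply, map_add, map_sum, map_mul,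
        sub_mul, Finset.sum_sub_distrib]
      ring
    rw [this]
    refine IsUltrametricDist.norm_sum_le_of_forall_le_of_nonneg hpos fun k _ => ?_
    rw [norm_mul, hι]
    exact (mul_le_of_le_one_right (norm_nonneg _) (PadicInt.norm_le_one _)).trans (hz i k)
end

section
/- A pair (γ, υ) ∈ Iw_{GL_g} × M_g(pℤ_p) satisfies ᵗγ J̆ υ = ᵗυ J̆ γ (i.e. lies in T_0) if and only if there exist α_b, α_d ∈ M_g(ℤ_p) such that the block matrix [[γ, α_b],[υ, α_d]] belongs to GSp_{2g}(ℚ_p) ∩ M_{2g}(ℤ_p). -/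
open Matrix

/-- Entrywise inclusion `M(ℤ_p) → M(ℚ_p)`. -/
def toQ {p : ℕ} [Fact p.Prime] {m n : Type*} (M : Matrix m n ℤ_[p]) :
    Matrix m n ℚ_[p] :=
  M.map fun x => (x : ℚ_[p])

lemma Jb_transpose (g : ℕ) (R : Type*) [CommRing R] : (Jb g R)ᵀ = Jb g R := by
  ext i j
  simp only [Jb, Matrix.transpose_apply, Matrix.of_apply]
  rw [Nat.add_comm (j : ℕ) (i : ℕ)]

lemma Jb_mul_self (g : ℕ) (R : Type*) [CommRing R] : Jb g R * Jb g R = 1 := by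
  ext i j
  rw [Matrix.mul_apply, Finset.sum_eq_single (Fin.rev i)]
  · simp only [Jb, Matrix.of_apply, Matrix.one_apply, Fin.val_rev, Fin.ext_iff]
    have h1 : (i : ℕ) + (g - ((i : ℕ) + 1)) + 1 = g := by omega
    rw [if_pos h1, one_mul]
    congr 1
    apply propext
    omega
  · intro k _ hk
    have : ¬ ((i : ℕ) + (k : ℕ) + 1 = g) := by
      intro h
      apply hk
      ext
      rw [Fin.val_rev]
      omega
    simp [Jb, this]
  · simp

lemma gsp_block (g : ℕ) (R : Type*) [CommRing R] (a b c d : Matrix (Fin g) (Fin g) R) :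
    (Matrix.fromBlocks a b c d)ᵀ * Jmat g R * Matrix.fromBlocks a b c d =
      Matrix.fromBlocks (cᵀ * Jb g R * a - aᵀ * Jb g R * c)
        (cᵀ * Jb g R * b - aᵀ * Jb g R * d)
        (dᵀ * Jb g R * a - bᵀ * Jb g R * c)
        (dᵀ * Jb g R * b - bᵀ * Jb g R * d) := by
  simp [Jmat, Matrix.fromBlocks_transpose, Matrix.fromBlocks_multiply, sub_eq_add_neg]

lemma toQ_mul {p g : ℕ} [Fact p.Prime] (A B : Matrix (Fin g) (Fin g) ℤ_[p]) :
    toQ (A * B) = toQ A * toQ B :=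
  Matrix.map_mul (f := (PadicInt.Coe.ringHom : ℤ_[p] →+* ℚ_[p]))

lemma toQ_Jb (p g : ℕ) [Fact p.Prime] : toQ (Jb g ℤ_[p]) = Jb g ℚ_[p] := by
  ext i j
  simp only [toQ, Jb, Matrix.map_apply, Matrix.of_apply]
  split_ifs <;> simp

lemma toQ_inj {p g : ℕ} [Fact p.Prime] {A B : Matrix (Fin g) (Fin g) ℤ_[p]}
    (h : toQ A = toQ B) : A = B := by
  ext i j
  have := congrFun (congrFun h i) j
  exact Subtype.ext this

theorem statement9 (p g : ℕ) [Fact p.Prime] (hg : 1 ≤ g)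
    (γ υ : Matrix (Fin g) (Fin g) ℤ_[p]) (hγ : γ ∈ IwGL p g)
    (hυ : ∀ i j : Fin g, (p : ℤ_[p]) ∣ υ i j) :
    γᵀ * Jb g ℤ_[p] * υ = υᵀ * Jb g ℤ_[p] * γ ↔
      ∃ αb αd : Matrix (Fin g) (Fin g) ℤ_[p],
        IsGSp (toQ (Matrix.fromBlocks γ αb υ αd)) := by
  have hblk : ∀ b d : Matrix (Fin g) (Fin g) ℤ_[p], toQ (Matrix.fromBlocks γ b υ d) =
      Matrix.fromBlocks (toQ γ) (toQ b) (toQ υ) (toQ d) := fun b d =>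
    Matrix.fromBlocks_map _ _ _ _ _
  have hT : ∀ A : Matrix (Fin g) (Fin g) ℤ_[p], (toQ A)ᵀ = toQ Aᵀ := fun A => rfl
  constructor
  · intro h
    have hu : IsUnit (γᵀ).det := by rw [Matrix.det_transpose]; exact hγ.1
    have hJ := Jb_mul_self g ℤ_[p]
    have hJt := Jb_transpose g ℤ_[p]
    set d := Jb g ℤ_[p] * (γᵀ)⁻¹ * Jb g ℤ_[p] with hd
    have h1 : γᵀ * Jb g ℤ_[p] * d = Jb g ℤ_[p] := by
      calc γᵀ * Jb g ℤ_[p] * d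
          = γᵀ * (Jb g ℤ_[p] * Jb g ℤ_[p]) * (γᵀ)⁻¹ * Jb g ℤ_[p] := by
            rw [hd]; simp only [Matrix.mul_assoc]
        _ = Jb g ℤ_[p] := by
            rw [hJ, Matrix.mul_one, Matrix.mul_nonsing_inv _ hu, Matrix.one_mul]
    have h2 : dᵀ * Jb g ℤ_[p] * γ = Jb g ℤ_[p] := by
      have := congrArg Matrix.transpose h1
      simpa [Matrix.transpose_mul, hJt, Matrix.mul_assoc] using this
    have key : (toQ (Matrix.fromBlocks γ 0 υ d))ᵀ * Jmat g ℚ_[p] *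
        toQ (Matrix.fromBlocks γ 0 υ d) = Jmat g ℚ_[p] := by
      have h0 : toQ (0 : Matrix (Fin g) (Fin g) ℤ_[p]) = 0 := by ext; simp [toQ]
      rw [hblk, gsp_block, h0]
      simp only [hT, ← toQ_Jb, ← toQ_mul, h, h1, h2, Jmat]
      simp
    refine ⟨0, d, ?_, 1, ?_⟩
    · have hJm : Jmat g ℚ_[p] * Jmat g ℚ_[p] = -1 := by
        rw [Jmat, Matrix.fromBlocks_multiply]
        simp [Jb_mul_self, ← Matrix.fromBlocks_one, Matrix.fromBlocks_neg]
      have hl : (-(Jmat g ℚ_[p] * (toQ (Matrix.fromBlocks γ 0 υ d))ᵀ * Jmat g ℚ_[p])) *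
          toQ (Matrix.fromBlocks γ 0 υ d) = 1 := by
        rw [Matrix.neg_mul, Matrix.mul_assoc, Matrix.mul_assoc, ← Matrix.mul_assoc _ᵀ, key, hJm,
          neg_neg]
      exact Matrix.isUnit_det_of_left_inverse hl
    · rw [key]; simp
  · rintro ⟨b, d, -, s, hs⟩
    rw [hblk, gsp_block, Jmat, Matrix.fromBlocks_smul, Matrix.fromBlocks_inj] at hs
    have h := hs.1
    rw [smul_zero, sub_eq_zero] at h
    simp only [hT, ← toQ_Jb, ← toQ_mul] at h
    exact (toQ_inj h).symm
end
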